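/- The class of unary MSO queries on ordered unranked Σ-trees is precisely the class of unary queries defined by formulas of the full μ-calculus L_μ^full (the μ-calculus extended with backward modalities) over the two binary relations ≺_ch (child) and ≺_ns (next sibling). -/

import Mathlib

/-!
# Unary MSO queries and the full μ-calculus on ordered unranked trees

From the μ-calculus to MSO, the standard translation works: a least fixed point is the
intersection of all prefixed sets, and child and next sibling are the covering relations of
`desc` and `sib` (`sat_toMSO`).

For the converse, a tree is read as a binary tree through the first-child/next-sibling encoding
(`UTree.forest`), whose letters record the label of a node, the first-order variables denoting it
and the set variables containing it. By induction on the formula, using products, complements and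
the subset construction for quantifiers, satisfaction of an MSO formula is recognised by a
deterministic bottom-up automaton (`reg_of_mso`). A unary query is therefore decided by an
automaton reading the labels together with a mark on the current node (`automaton_of_mso`).

The marked run is evaluated inside the μ-calculus. The state reached at a node by the unmarked run
is determined by the states at its first child and its next sibling. The context of a node, that
is, the set of states which, when placed there, make the run accepting at the root, is determined
by the context of its parent (for a first child) or previous sibling, together with unmarked
states. A node is selected iff the transition for the mark, applied to the unmarked states of its
two binary children, lands in its context (`Ctx.accept`). All of this forms one finite
simultaneous least fixed point whose unknowns are the states, the contexts and the answer
(`leastFam_evalOp`). Bekić's principle (`leastFam_bekic`) eliminates the unknowns one by one and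
turns the system into a single μ-calculus formula (`sem_sol`).
-/

namespace UnrankedTrees

/-! ### Unranked trees: tree domains and ordered unranked Σ-trees.
Nodes are finite strings over ℕ; a tree domain is a finite prefix-closed set
of nodes such that `s ++ [i] ∈ D` implies `s ++ [j] ∈ D` for all `j < i`. -/

abbrev Node : Type := List ℕ

/-- An ordered unranked tree over alphabet `A`: a tree domain with a labeling. -/
structure UTree (A : Type) where
  dom : Finset Node
  nil_mem : ([] : Node) ∈ dom
  prefix_closed : ∀ ⦃s t : Node⦄, s ∈ dom → t <+: s → t ∈ dom
  sib_closed : ∀ ⦃s : Node⦄ ⦃i j : ℕ⦄, s ++ [i] ∈ dom → j < i → s ++ [j] ∈ dom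
  label : Node → A

namespace UTree

variable {A : Type}

/-- The child relation `≺_ch`. -/
def childR (T : UTree A) (s t : Node) : Prop :=
  s ∈ T.dom ∧ t ∈ T.dom ∧ ∃ i : ℕ, t = s ++ [i]

/-- The descendant-or-self relation `≺*_ch` (the prefix relation). -/
def descR (T : UTree A) (s t : Node) : Prop :=
  s ∈ T.dom ∧ t ∈ T.dom ∧ s <+: t

/-- The next-sibling relation `≺_ns`. -/
def nsR (T : UTree A) (s t : Node) : Prop :=
  s ∈ T.dom ∧ t ∈ T.dom ∧ ∃ (u : Node) (i : ℕ), s = u ++ [i] ∧ t = u ++ [i + 1]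

/-- The sibling ordering `≺*_ns` (reflexive-transitive closure of next-sibling). -/
def sibR (T : UTree A) (s t : Node) : Prop :=
  s ∈ T.dom ∧ t ∈ T.dom ∧ ∃ (u : Node) (i j : ℕ), s = u ++ [i] ∧ t = u ++ [j] ∧ i ≤ j

/-- The first-child relation `≺_fc`. -/
def firstChildR (T : UTree A) (s t : Node) : Prop :=
  s ∈ T.dom ∧ t ∈ T.dom ∧ t = s ++ [0]

/-- The number of children of a node. -/
noncomputable def childCount (T : UTree A) (s : Node) : ℕ :=
  Set.ncard {i : ℕ | s ++ [i] ∈ T.dom}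

/-- The list of children of a node `s`, in sibling order: `s·0, …, s·(n-1)`. -/
noncomputable def childrenList (T : UTree A) (s : Node) : List Node :=
  (List.range (T.childCount s)).map fun i => s ++ [i]

/-- `s` is a leaf of `T`. -/
def isLeaf (T : UTree A) (s : Node) : Prop :=
  s ∈ T.dom ∧ ∀ i : ℕ, s ++ [i] ∉ T.dom

/-- `s` has no next sibling in `T` (the root also counts as "last"). -/
def isLast (T : UTree A) (s : Node) : Prop :=
  s = [] ∨ ∃ (u : Node) (i : ℕ), s = u ++ [i] ∧ u ++ [i + 1] ∉ T.dom

end UTree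

/-! ### MSO over ordered unranked trees.
First-order variables and monadic second-order variables are indexed by ℕ.
First-order quantifiers range over the nodes of the tree, set quantifiers over
sets of nodes of the tree. -/

inductive MSO (A : Type) : Type where
  | eq : ℕ → ℕ → MSO A
  | desc : ℕ → ℕ → MSO A               -- x ≺*_ch y
  | sib : ℕ → ℕ → MSO A                -- x ≺*_ns y
  | lab : A → ℕ → MSO A                -- P_a(x)
  | mem : ℕ → ℕ → MSO A                -- X(x)
  | not : MSO A → MSO A
  | and : MSO A → MSO A → MSO A
  | exFO : ℕ → MSO A → MSO A
  | exSO : ℕ → MSO A → MSO A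

namespace MSO

variable {A : Type}

def Sat (T : UTree A) (v : ℕ → Node) (V : ℕ → Set Node) : MSO A → Prop
  | .eq x y => v x = v y
  | .desc x y => T.descR (v x) (v y)
  | .sib x y => T.sibR (v x) (v y)
  | .lab a x => v x ∈ T.dom ∧ T.label (v x) = a
  | .mem X x => v x ∈ V X
  | .not φ => ¬ Sat T v V φ
  | .and φ ψ => Sat T v V φ ∧ Sat T v V ψ
  | .exFO n φ => ∃ s ∈ T.dom, Sat T (Function.update v n s) V φ
  | .exSO n φ => ∃ S : Set Node, S ⊆ ↑T.dom ∧ Sat T v (Function.update V n S) φ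

/-- `φ`, as a sentence, defines the set `L` of trees.  (Quantifying over all
valuations forces the truth value to be independent of the valuation, i.e.
`φ` behaves as a sentence.) -/
def DefinesB (φ : MSO A) (L : Set (UTree A)) : Prop :=
  ∀ (T : UTree A) (v : ℕ → Node) (V : ℕ → Set Node), T ∈ L ↔ Sat T v V φ

/-- `φ`, as a formula whose only free variable is the first-order variable `0`,
defines the unary query `Q`. -/
def DefinesU (φ : MSO A) (Q : UTree A → Set Node) : Prop :=
  ∀ (T : UTree A) (v : ℕ → Node) (V : ℕ → Set Node) (s : Node), s ∈ T.dom →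
    (s ∈ Q T ↔ Sat T (Function.update v 0 s) V φ)

end MSO

/-! ### The modal μ-calculus over trees, with relation symbols drawn from `R`
(and optional backward modalities). Set variables are indexed by ℕ. -/

inductive MuForm (A R : Type) : Type where
  | lab : A → MuForm A R
  | var : ℕ → MuForm A R
  | or : MuForm A R → MuForm A R → MuForm A R
  | not : MuForm A R → MuForm A R
  | dia : R → MuForm A R → MuForm A R        -- ◇(E_r) φ
  | diaB : R → MuForm A R → MuForm A R       -- ◇(E_r⁻) φ (backward modality)
  | mu : ℕ → MuForm A R → MuForm A R

namespace MuForm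

variable {A R : Type}

/-- Polarity check: `pol n φ true` says every free occurrence of the set
variable `n` in `φ` is positive (`false`: negative). -/
def pol (n : ℕ) : MuForm A R → Bool → Prop
  | .lab _, _ => True
  | .var k, b => b = true ∨ k ≠ n
  | .or φ ψ, b => pol n φ b ∧ pol n ψ b
  | .not φ, b => pol n φ (!b)
  | .dia _ φ, b => pol n φ b
  | .diaB _ φ, b => pol n φ b
  | .mu k φ, b => k = n ∨ pol n φ b

/-- Well-formedness: in every subformula `μX.φ`, `X` occurs only positively. -/
def WF : MuForm A R → Prop
  | .lab _ => True
  | .var _ => True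
  | .or φ ψ => WF φ ∧ WF ψ
  | .not φ => WF φ
  | .dia _ φ => WF φ
  | .diaB _ φ => WF φ
  | .mu k φ => pol k φ true ∧ WF φ

/-- `φ` contains no backward modality (plain μ-calculus `L_μ`). -/
def NoBack : MuForm A R → Prop
  | .lab _ => True
  | .var _ => True
  | .or φ ψ => NoBack φ ∧ NoBack ψ
  | .not φ => NoBack φ
  | .dia _ φ => NoBack φ
  | .diaB _ _ => False
  | .mu _ φ => NoBack φ

/-- Semantics: the set of nodes of `T` at which a formula holds, where `rel`
interprets the relation symbols. -/
def sem (T : UTree A) (rel : R → Node → Node → Prop) (V : ℕ → Set Node) :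
    MuForm A R → Set Node
  | .lab a => {s | s ∈ T.dom ∧ T.label s = a}
  | .var n => V n
  | .or φ ψ => sem T rel V φ ∪ sem T rel V ψ
  | .not φ => {s | s ∈ T.dom ∧ s ∉ sem T rel V φ}
  | .dia r φ => {s | s ∈ T.dom ∧ ∃ t : Node, rel r s t ∧ t ∈ sem T rel V φ}
  | .diaB r φ => {s | s ∈ T.dom ∧ ∃ t : Node, rel r t s ∧ t ∈ sem T rel V φ}
  | .mu n φ =>
      {s | ∀ P : Set Node, sem T rel (Function.update V n P) φ ⊆ P → s ∈ P}

end MuForm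

/-- The two relations of statement 7: child and next sibling. -/
inductive ChNs : Type where
  | ch : ChNs
  | ns : ChNs

def ChNs.rel {A : Type} (T : UTree A) : ChNs → Node → Node → Prop
  | .ch => T.childR
  | .ns => T.nsR

/-! ### From the μ-calculus to MSO -/

section MuToMSO

variable {A : Type}

/-- `y` is a minimal strict successor of `x` for the order `R` (`desc` or `sib`);
`z` is a scratch variable. -/
def coverF (R : ℕ → ℕ → MSO A) (x y z : ℕ) : MSO A :=
  .and (R x y) (.and (.not (.eq x y))
    (.not (.exFO z (.and (R x z) (.and (R z y) (.and (.not (.eq z x)) (.not (.eq z y))))))))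

/-- MSO definition of the child and next-sibling relations. -/
def relF : ChNs → ℕ → ℕ → ℕ → MSO A
  | .ch => coverF .desc
  | .ns => coverF .sib

lemma childR_iff (T : UTree A) (s t : Node) :
    T.childR s t ↔ T.descR s t ∧ s ≠ t ∧
      ¬ ∃ z ∈ T.dom, T.descR s z ∧ T.descR z t ∧ z ≠ s ∧ z ≠ t := by
  constructor
  · rintro ⟨hs, ht, i, rfl⟩
    refine ⟨⟨hs, ht, List.prefix_append _ _⟩, by simp, ?_⟩
    rintro ⟨z, -, ⟨-, -, hz⟩, ⟨-, -, hz'⟩, h1, h2⟩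
    rcases List.prefix_concat_iff.1 hz' with h | h
    · exact h2 h
    · exact h1 (h.eq_of_length (le_antisymm h.length_le hz.length_le))
  · rintro ⟨⟨hs, ht, w, rfl⟩, hne, hmin⟩
    refine ⟨hs, ht, ?_⟩
    rcases w with _ | ⟨i, w⟩
    · simp at hne
    · refine ⟨i, ?_⟩
      by_contra hc
      have hp : s ++ [i] <+: s ++ i :: w := ⟨w, by simp⟩
      have hd := T.prefix_closed ht hp
      exact hmin ⟨s ++ [i], hd, ⟨hs, hd, List.prefix_append _ _⟩, ⟨hd, ht, hp⟩, by simp,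
        fun h => hc h.symm⟩

lemma nsR_iff (T : UTree A) (s t : Node) :
    T.nsR s t ↔ T.sibR s t ∧ s ≠ t ∧
      ¬ ∃ z ∈ T.dom, T.sibR s z ∧ T.sibR z t ∧ z ≠ s ∧ z ≠ t := by
  constructor
  · rintro ⟨hs, ht, u, i, rfl, rfl⟩
    refine ⟨⟨hs, ht, u, i, i + 1, rfl, rfl, by omega⟩, by simp, ?_⟩
    rintro ⟨z, -, ⟨-, -, u1, i1, j1, e1, e2, h1⟩, ⟨-, -, u2, i2, j2, e3, e4, h2⟩, n1, n2⟩
    subst e2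
    simp only [List.append_singleton_inj] at e1 e3 e4
    obtain ⟨rfl, rfl⟩ := e1
    obtain ⟨rfl, rfl⟩ := e4
    obtain ⟨-, rfl⟩ := e3
    simp at n1 n2
    omega
  · rintro ⟨⟨hs, ht, u, i, j, rfl, rfl, hij⟩, hne, hmin⟩
    refine ⟨hs, ht, u, i, rfl, ?_⟩
    have hlt : i < j := by
      rcases hij.lt_or_eq with h | h
      · exact h
      · simp [h] at hne
    by_contra hc
    have hc' : i + 1 ≠ j := fun h => hc (by rw [h])
    have hd : u ++ [i + 1] ∈ T.dom := T.sib_closed ht (by omega)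
    exact hmin ⟨u ++ [i + 1], hd, ⟨hs, hd, u, i, i + 1, rfl, rfl, by omega⟩,
      ⟨hd, ht, u, i + 1, j, rfl, rfl, by omega⟩, by simp, by simpa using hc'⟩

lemma sat_relF (T : UTree A) (v : ℕ → Node) (V : ℕ → Set Node) (r : ChNs) {x y z : ℕ}
    (hx : x ≠ z) (hy : y ≠ z) :
    MSO.Sat T v V (relF r x y z) ↔ ChNs.rel T r (v x) (v y) := by
  cases r
  · simp [relF, coverF, MSO.Sat, ChNs.rel, childR_iff, Function.update_of_ne hx,
      Function.update_of_ne hy]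
  · simp [relF, coverF, MSO.Sat, ChNs.rel, nsR_iff, Function.update_of_ne hx,
      Function.update_of_ne hy]

/-- Standard translation of the μ-calculus, `x` being the variable for the current node;
a least fixed point becomes membership in every prefixed set. -/
def toMSO : MuForm A ChNs → ℕ → MSO A
  | .lab a, x => .lab a x
  | .var n, x => .mem n x
  | .or φ ψ, x => .not (.and (.not (toMSO φ x)) (.not (toMSO ψ x)))
  | .not φ, x => .not (toMSO φ x)
  | .dia r φ, x => .exFO (x + 1) (.and (relF r x (x + 1) (x + 2)) (toMSO φ (x + 1)))
  | .diaB r φ, x => .exFO (x + 1) (.and (relF r (x + 1) x (x + 2)) (toMSO φ (x + 1)))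
  | .mu n φ, x => .not (.exSO n (.and
      (.not (.exFO (x + 1) (.and (toMSO φ (x + 1)) (.not (.mem n (x + 1))))))
      (.not (.mem n x))))

lemma rel_dom {T : UTree A} {r : ChNs} {s t : Node} (h : ChNs.rel T r s t) :
    s ∈ T.dom ∧ t ∈ T.dom := by
  cases r
  · exact ⟨h.1, h.2.1⟩
  · exact ⟨h.1, h.2.1⟩

/-- Inside the domain, the semantics only depends on the valuation inside the domain. -/
lemma sem_congr_dom (T : UTree A) (φ : MuForm A ChNs) :
    ∀ V W : ℕ → Set Node, (∀ n, ∀ s ∈ T.dom, s ∈ V n ↔ s ∈ W n) →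
      ∀ s ∈ T.dom, s ∈ φ.sem T (ChNs.rel T) V ↔ s ∈ φ.sem T (ChNs.rel T) W := by
  induction φ with
  | lab a => intro V W h s hs; simp [MuForm.sem]
  | var n => intro V W h s hs; exact h n s hs
  | or φ ψ ih1 ih2 =>
    intro V W h s hs
    simp only [MuForm.sem, Set.mem_union, ih1 V W h s hs, ih2 V W h s hs]
  | not φ ih =>
    intro V W h s hs
    simp only [MuForm.sem, Set.mem_ofPred_eq, ih V W h s hs]
  | dia r φ ih =>
    intro V W h s hs
    simp only [MuForm.sem, Set.mem_ofPred_eq]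
    refine and_congr_right fun _ => exists_congr fun t => and_congr_right fun ht => ?_
    exact ih V W h t (rel_dom ht).2
  | diaB r φ ih =>
    intro V W h s hs
    simp only [MuForm.sem, Set.mem_ofPred_eq]
    refine and_congr_right fun _ => exists_congr fun t => and_congr_right fun ht => ?_
    exact ih V W h t (rel_dom ht).1
  | mu n φ ih =>
    have key : ∀ V W : ℕ → Set Node, (∀ n, ∀ s ∈ T.dom, s ∈ V n ↔ s ∈ W n) →
      ∀ s ∈ T.dom, s ∈ (MuForm.mu n φ).sem T (ChNs.rel T) V →
        s ∈ (MuForm.mu n φ).sem T (ChNs.rel T) W := by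
      intro V W h s hs hV P hP
      -- enlarge the prefixed set by everything outside the domain
      have := hV (P ∪ {t | t ∉ T.dom}) ?_
      · rcases this with h1 | h1
        · exact h1
        · exact absurd hs h1
      · intro t ht
        by_cases htd : t ∈ T.dom
        · left
          apply hP
          refine (ih _ _ ?_ t htd).1 ht
          intro m u hu
          by_cases hm : m = n
          · subst hm; simp [hu]
          · simpa [Function.update_of_ne hm] using h m u hu
        · right; exact htd
    intro V W h s hs
    exact ⟨key V W h s hs, key W V (fun n s hs => (h n s hs).symm) s hs⟩

lemma sat_toMSO (T : UTree A) (φ : MuForm A ChNs) :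
    ∀ (x : ℕ) (v : ℕ → Node) (V : ℕ → Set Node), v x ∈ T.dom →
      (MSO.Sat T v V (toMSO φ x) ↔ v x ∈ φ.sem T (ChNs.rel T) V) := by
  induction φ with
  | lab a => intro x v V h; rfl
  | var n => intro x v V h; rfl
  | or φ ψ ih1 ih2 =>
    intro x v V h
    simp only [toMSO, MSO.Sat, ih1 x v V h, ih2 x v V h, MuForm.sem, Set.mem_union]
    tauto
  | not φ ih =>
    intro x v V h
    simp [toMSO, MSO.Sat, ih x v V h, MuForm.sem, h]
  | dia r φ ih =>
    intro x v V h
    simp only [toMSO, MSO.Sat, MuForm.sem, Set.mem_ofPred_eq, h, true_and]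
    refine exists_congr fun t => ?_
    rw [sat_relF _ _ _ _ (by omega) (by omega)]
    constructor
    · rintro ⟨ht, h1, h2⟩
      rw [ih _ _ _ (by simpa using ht)] at h2
      simp at h1 h2
      exact ⟨h1, h2⟩
    · rintro ⟨h1, h2⟩
      have ht := (rel_dom h1).2
      refine ⟨ht, by simpa using h1, ?_⟩
      rw [ih _ _ _ (by simpa using ht)]
      simpa using h2
  | diaB r φ ih =>
    intro x v V h
    simp only [toMSO, MSO.Sat, MuForm.sem, Set.mem_ofPred_eq, h, true_and]
    refine exists_congr fun t => ?_
    rw [sat_relF _ _ _ _ (by omega) (by omega)]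
    constructor
    · rintro ⟨ht, h1, h2⟩
      rw [ih _ _ _ (by simpa using ht)] at h2
      simp at h1 h2
      exact ⟨h1, h2⟩
    · rintro ⟨h1, h2⟩
      have ht := (rel_dom h1).1
      refine ⟨ht, by simpa using h1, ?_⟩
      rw [ih _ _ _ (by simpa using ht)]
      simpa using h2
  | mu n φ ih =>
    intro x v V h
    have key : ∀ S : Set Node, (¬ ∃ s ∈ T.dom,
        MSO.Sat T (Function.update v (x + 1) s) (Function.update V n S) (toMSO φ (x + 1)) ∧
          ¬ s ∈ S) ↔ ∀ s ∈ T.dom, s ∈ φ.sem T (ChNs.rel T) (Function.update V n S) → s ∈ S := by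
      intro S
      push Not
      refine forall_congr' fun s => forall_congr' fun hs => ?_
      rw [ih _ _ _ (by simpa using hs)]
      simp
    simp only [toMSO, MSO.Sat, MuForm.sem, Set.mem_ofPred_eq, Function.update_self, key]
    constructor
    · intro hS P hP
      by_contra hc
      refine hS ⟨P ∩ T.dom, Set.inter_subset_right, ?_, fun h => hc h.1⟩
      intro s hs hs'
      refine ⟨hP ?_, hs⟩
      refine (sem_congr_dom T φ _ _ ?_ s hs).1 hs'
      intro m u hu
      by_cases hm : m = n
      · subst hm; simp [hu]
      · simp [Function.update_of_ne hm]
    · rintro hP ⟨S, hS, h1, h2⟩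
      have := hP (S ∪ {t | t ∉ T.dom}) ?_
      · rcases this with h3 | h3
        · exact h2 h3
        · exact h3 h
      · intro t ht
        by_cases htd : t ∈ T.dom
        · left
          apply h1 t htd
          refine (sem_congr_dom T φ _ _ ?_ t htd).1 ht
          intro m u hu
          by_cases hm : m = n
          · subst hm; simp [hu]
          · simp [Function.update_of_ne hm]
        · right; exact htd

end MuToMSO

/-! ### Binary trees and finite-state recognisability -/

/-- Binary trees with nodes named by `N`. -/
inductive BT (N : Type) : Type where
  | leaf : BT N
  | node : N → BT N → BT N → BT N

namespace BT

variable {N : Type}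

def toList : BT N → List N
  | leaf => []
  | node a l r => a :: (l.toList ++ r.toList)

/-- The right spine: the siblings starting at the root, when `BT` is read as a
first-child/next-sibling encoding. -/
def top : BT N → List N
  | leaf => []
  | node a _ r => a :: r.top

/-- Descendant-or-self in the unranked tree encoded by the binary tree. -/
def Desc : BT N → N → N → Prop
  | leaf, _, _ => False
  | node a l r, s, t => (s = a ∧ (t = a ∨ t ∈ l.toList)) ∨ Desc l s t ∨ Desc r s t

/-- Sibling order among the top-level siblings. -/
def SibTop : BT N → N → N → Prop
  | leaf, _, _ => False
  | node a _ r, s, t => (s = a ∧ (t = a ∨ t ∈ r.top)) ∨ SibTop r s t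

/-- Sibling order among the nodes that are not at top level. -/
def SibIn : BT N → N → N → Prop
  | leaf, _, _ => False
  | node _ l r, s, t => SibTop l s t ∨ SibIn l s t ∨ SibIn r s t

/-- Run of the deterministic bottom-up tree automaton with transition function `δ` and
leaf state `q₀`, on the tree whose letters are given by `c`. -/
def run {Γ Q : Type} (q₀ : Q) (δ : Γ → Q → Q → Q) (c : N → Γ) : BT N → Q
  | leaf => q₀
  | node a l r => δ (c a) (run q₀ δ c l) (run q₀ δ c r)

lemma run_congr {Γ Q : Type} (q₀ : Q) (δ : Γ → Q → Q → Q) {c c' : N → Γ} :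
    ∀ t : BT N, (∀ s ∈ t.toList, c s = c' s) → run q₀ δ c t = run q₀ δ c' t
  | leaf, _ => rfl
  | node a l r, h => by
    simp only [toList, List.mem_cons, List.mem_append] at h
    simp only [run]
    rw [run_congr q₀ δ l fun s hs => h s (by tauto), run_congr q₀ δ r fun s hs => h s (by tauto),
      h a (by tauto)]

end BT

open BT

/-- `P` is recognised by a deterministic bottom-up tree automaton, on trees without repeated node
names. The alphabet `Γ` may be infinite; only the state set has to be finite. -/
def Reg {Γ : Type} (P : BT Node → (Node → Γ) → Prop) : Prop :=
  ∃ (Q : Type) (_ : Finite Q) (q₀ : Q) (δ : Γ → Q → Q → Q) (F : Set Q),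
    ∀ (t : BT Node) (c : Node → Γ), t.toList.Nodup → (P t c ↔ run q₀ δ c t ∈ F)

section Reg

variable {Γ : Type} {P P' : BT Node → (Node → Γ) → Prop}

lemma Reg.not (h : Reg P) : Reg fun t c => ¬ P t c := by
  obtain ⟨Q, hQ, q₀, δ, F, h⟩ := h
  exact ⟨Q, hQ, q₀, δ, Fᶜ, fun t c ht => by simp [h t c ht]⟩

lemma Reg.and (h : Reg P) (h' : Reg P') : Reg fun t c => P t c ∧ P' t c := by
  obtain ⟨Q, hQ, q₀, δ, F, h⟩ := h
  obtain ⟨Q', hQ', q₀', δ', F', h'⟩ := h'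
  refine ⟨Q × Q', inferInstance, (q₀, q₀'), fun γ l r => (δ γ l.1 r.1, δ' γ l.2 r.2), F ×ˢ F', ?_⟩
  intro t c ht
  beta_reduce
  have key : ∀ t : BT Node, run (q₀, q₀') (fun γ l r => (δ γ l.1 r.1, δ' γ l.2 r.2)) c t =
      (run q₀ δ c t, run q₀' δ' c t) := by
    intro t
    induction t with
    | leaf => rfl
    | node a l r ihl ihr => simp [run, ihl, ihr]
  rw [h t c ht, h' t c ht, key, Set.mem_prod]

/-- Closure under guessing a relabelling, by the subset construction. -/
lemma Reg.proj (h : Reg P) (rel : Γ → Γ → Prop) (hrel : ∀ γ, rel γ γ) :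
    Reg fun t c => ∃ c' : Node → Γ, (∀ s, rel (c s) (c' s)) ∧ P t c' := by
  classical
  obtain ⟨Q, hQ, q₀, δ, F, h⟩ := h
  refine ⟨Set Q, inferInstance, {q₀},
    fun γ L R => {q | ∃ γ', rel γ γ' ∧ ∃ l ∈ L, ∃ r ∈ R, q = δ γ' l r}, {S | ∃ q ∈ S, q ∈ F}, ?_⟩
  intro t c ht
  beta_reduce
  have key : ∀ t : BT Node, t.toList.Nodup → ∀ q, q ∈ run ({q₀} : Set Q)
      (fun γ L R => {q | ∃ γ', rel γ γ' ∧ ∃ l ∈ L, ∃ r ∈ R, q = δ γ' l r}) c t ↔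
      ∃ c' : Node → Γ, (∀ s, rel (c s) (c' s)) ∧ q = run q₀ δ c' t := by
    intro t
    induction t with
    | leaf =>
      intro _ q
      simp only [run, Set.mem_singleton_iff]
      exact ⟨fun h => ⟨c, fun s => hrel _, h⟩, fun ⟨_, _, h⟩ => h⟩
    | node a l r ihl ihr =>
      intro hn q
      simp only [toList, List.nodup_cons, List.mem_append, not_or, List.nodup_append] at hn
      obtain ⟨⟨hal, har⟩, hl, hr, hlr⟩ := hn
      simp only [run, Set.mem_ofPred_eq]
      constructor
      · rintro ⟨γ', hγ, ql, hql, qr, hqr, rfl⟩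
        obtain ⟨c1, h1, rfl⟩ := (ihl hl _).1 hql
        obtain ⟨c2, h2, rfl⟩ := (ihr hr _).1 hqr
        refine ⟨fun s => if s = a then γ' else if s ∈ l.toList then c1 s else c2 s, ?_, ?_⟩
        · intro s
          dsimp only
          split_ifs with h3 h4
          · exact h3 ▸ hγ
          · exact h1 s
          · exact h2 s
        · beta_reduce
          rw [if_pos rfl]
          congr 1
          · refine run_congr q₀ δ l fun s hs => ?_
            rw [if_neg (fun h : s = a => hal (h ▸ hs)), if_pos hs]
          · refine run_congr q₀ δ r fun s hs => ?_
            rw [if_neg (fun h : s = a => har (h ▸ hs)), if_neg (fun h => hlr _ h _ hs rfl)]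
      · rintro ⟨c', hc', rfl⟩
        exact ⟨c' a, hc' a, _, (ihl hl _).2 ⟨c', hc', rfl⟩, _, (ihr hr _).2 ⟨c', hc', rfl⟩, rfl⟩
  simp only [Set.mem_ofPred_eq, key t ht]
  constructor
  · rintro ⟨c', h1, h2⟩
    exact ⟨_, ⟨c', h1, rfl⟩, (h t c' ht).1 h2⟩
  · rintro ⟨_, ⟨c', h1, rfl⟩, h2⟩
    exact ⟨c', h1, (h t c' ht).2 h2⟩

lemma reg_exists (p : Γ → Prop) : Reg fun t c => ∃ s ∈ t.toList, p (c s) := by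
  refine ⟨Prop, inferInstance, False, fun γ l r => p γ ∨ l ∨ r, {q | q}, ?_⟩
  rintro t c -
  beta_reduce
  simp only [Set.mem_ofPred_eq]
  induction t with
  | leaf => simp [toList, run]
  | node a l r ihl ihr => grind [toList, run]

/-- Two distinct nodes carry letters satisfying `p`. -/
lemma reg_two (p : Γ → Prop) :
    Reg fun t c => ∃ s ∈ t.toList, ∃ s' ∈ t.toList, s ≠ s' ∧ p (c s) ∧ p (c s') := by
  let δ : Γ → Prop × Prop → Prop × Prop → Prop × Prop := fun γ l r =>
    (p γ ∨ l.1 ∨ r.1, l.2 ∨ r.2 ∨ (p γ ∧ l.1) ∨ (p γ ∧ r.1) ∨ (l.1 ∧ r.1))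
  refine ⟨Prop × Prop, inferInstance, (False, False), δ, {q | q.2}, ?_⟩
  intro t c ht
  beta_reduce
  have h1 : ∀ t : BT Node, (run (False, False) δ c t).1 ↔ ∃ s ∈ t.toList, p (c s) := by
    intro t
    induction t with
    | leaf => simp [toList, run]
    | node a l r ihl ihr =>
      simp only [run, δ, ihl, ihr, toList, List.mem_cons, List.mem_append]
      grind
  suffices h : (run (False, False) δ c t).2 ↔
      ∃ s ∈ t.toList, ∃ s' ∈ t.toList, s ≠ s' ∧ p (c s) ∧ p (c s') from h.symm
  induction t with
  | leaf => simp [toList, run]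
  | node a l r ihl ihr =>
    simp only [toList, List.nodup_cons, List.mem_append, not_or, List.nodup_append] at ht
    obtain ⟨⟨hal, har⟩, hl, hr, hlr⟩ := ht
    have e : (run (False, False) δ c (node a l r)).2 = ((run (False, False) δ c l).2 ∨
      (run (False, False) δ c r).2 ∨ (p (c a) ∧ (run (False, False) δ c l).1) ∨
      (p (c a) ∧ (run (False, False) δ c r).1) ∨
      ((run (False, False) δ c l).1 ∧ (run (False, False) δ c r).1)) := rfl
    rw [e, ihl hl, ihr hr, h1, h1]
    simp only [toList, List.mem_cons, List.mem_append]
    constructor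
    · rintro (⟨s, hs, s', hs', hne, hp, hp'⟩ | ⟨s, hs, s', hs', hne, hp, hp'⟩ |
        ⟨hp, s, hs, hp'⟩ | ⟨hp, s, hs, hp'⟩ | ⟨⟨s, hs, hp⟩, s', hs', hp'⟩)
      · exact ⟨s, .inr (.inl hs), s', .inr (.inl hs'), hne, hp, hp'⟩
      · exact ⟨s, .inr (.inr hs), s', .inr (.inr hs'), hne, hp, hp'⟩
      · exact ⟨a, .inl rfl, s, .inr (.inl hs), fun h => hal (h ▸ hs), hp, hp'⟩
      · exact ⟨a, .inl rfl, s, .inr (.inr hs), fun h => har (h ▸ hs), hp, hp'⟩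
      · exact ⟨s, .inr (.inl hs), s', .inr (.inr hs'), hlr s hs s' hs', hp, hp'⟩
    · rintro ⟨s, rfl | hs | hs, s', rfl | hs' | hs', hne, hp, hp'⟩
      · exact absurd rfl hne
      · exact .inr (.inr (.inl ⟨hp, s', hs', hp'⟩))
      · exact .inr (.inr (.inr (.inl ⟨hp, s', hs', hp'⟩)))
      · exact .inr (.inr (.inl ⟨hp', s, hs, hp⟩))
      · exact .inl ⟨s, hs, s', hs', hne, hp, hp'⟩
      · exact .inr (.inr (.inr (.inr ⟨⟨s, hs, hp⟩, s', hs', hp'⟩)))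
      · exact .inr (.inr (.inr (.inl ⟨hp', s, hs, hp⟩)))
      · exact .inr (.inr (.inr (.inr ⟨⟨s', hs', hp'⟩, s, hs, hp⟩)))
      · exact .inr (.inl ⟨s, hs, s', hs', hne, hp, hp'⟩)

lemma reg_desc (p p' : Γ → Prop) :
    Reg fun t c => ∃ s s', t.Desc s s' ∧ p (c s) ∧ p' (c s') := by
  let δ : Γ → Prop × Prop → Prop × Prop → Prop × Prop := fun γ l r =>
    (p' γ ∨ l.1 ∨ r.1, (p γ ∧ (p' γ ∨ l.1)) ∨ l.2 ∨ r.2)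
  refine ⟨Prop × Prop, inferInstance, (False, False), δ, {q | q.2}, ?_⟩
  rintro t c -
  beta_reduce
  have h1 : ∀ t : BT Node, (run (False, False) δ c t).1 ↔ ∃ s ∈ t.toList, p' (c s) := by
    intro t
    induction t with
    | leaf => simp [toList, run]
    | node a l r ihl ihr =>
      simp only [run, δ, ihl, ihr, toList, List.mem_cons, List.mem_append]
      grind
  suffices h : (run (False, False) δ c t).2 ↔
      ∃ s s', t.Desc s s' ∧ p (c s) ∧ p' (c s') from h.symm
  induction t with
  | leaf => simp [Desc, run]
  | node a l r ihl ihr =>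
    have e : (run (False, False) δ c (node a l r)).2 =
      ((p (c a) ∧ (p' (c a) ∨ (run (False, False) δ c l).1)) ∨ (run (False, False) δ c l).2 ∨
      (run (False, False) δ c r).2) := rfl
    rw [e, ihl, ihr, h1]
    simp only [Desc]
    grind

lemma reg_sib (p p' : Γ → Prop) :
    Reg fun t c => ∃ s s', t.SibIn s s' ∧ p (c s) ∧ p' (c s') := by
  let δ : Γ → Prop × Prop × Prop → Prop × Prop × Prop → Prop × Prop × Prop := fun γ l r =>
    (p' γ ∨ r.1, (p γ ∧ (p' γ ∨ r.1)) ∨ r.2.1, l.2.1 ∨ l.2.2 ∨ r.2.2)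
  refine ⟨Prop × Prop × Prop, inferInstance, (False, False, False), δ, {q | q.2.2}, ?_⟩
  rintro t c -
  beta_reduce
  have h1 : ∀ t : BT Node, (run (False, False, False) δ c t).1 ↔ ∃ s ∈ t.top, p' (c s) := by
    intro t
    induction t with
    | leaf => simp [top, run]
    | node a l r ihl ihr =>
      simp only [run, δ, ihr, top, List.mem_cons]
      grind
  have h2 : ∀ t : BT Node, (run (False, False, False) δ c t).2.1 ↔
      ∃ s s', t.SibTop s s' ∧ p (c s) ∧ p' (c s') := by
    intro t
    induction t with
    | leaf => simp [SibTop, run]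
    | node a l r ihl ihr =>
      simp only [run, δ, ihr, SibTop]
      have := h1 r
      grind
  suffices h : (run (False, False, False) δ c t).2.2 ↔
      ∃ s s', t.SibIn s s' ∧ p (c s) ∧ p' (c s') from h.symm
  induction t with
  | leaf => simp [SibIn, run]
  | node a l r ihl ihr =>
    have e : (run (False, False, False) δ c (node a l r)).2.2 =
      ((run (False, False, False) δ c l).2.1 ∨ (run (False, False, False) δ c l).2.2 ∨
      (run (False, False, False) δ c r).2.2) := rfl
    rw [e, ihl, ihr, h2]
    simp only [SibIn]
    grind

end Reg

/-! ### The first-child/next-sibling encoding -/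

namespace UTree

variable {A : Type}

/-- A strict bound for `length + sum` on the nodes of `T`. -/
def bound (T : UTree A) : ℕ := T.dom.sup (fun s => s.length + s.sum) + 1

lemma lt_bound (T : UTree A) {s : Node} (h : s ∈ T.dom) : s.length + s.sum < T.bound :=
  Nat.lt_succ_of_le (Finset.le_sup (f := fun s : Node => s.length + s.sum) h)

/-- Binary encoding of the forest formed by the subtrees rooted at the children
`u·i, u·(i+1), …` of `u`: the left subtree of a node encodes its children, the right one its later
siblings. -/
def forest (T : UTree A) (u : Node) (i : ℕ) : BT Node :=
  if u ++ [i] ∈ T.dom then .node (u ++ [i]) (T.forest (u ++ [i]) 0) (T.forest u (i + 1)) else .leaf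
termination_by T.bound - (u.length + u.sum + i)
decreasing_by
  all_goals
    rename_i h
    have := T.lt_bound h
    simp at this ⊢
    omega

/-- The forest of the later siblings of a node. -/
def later (T : UTree A) (s : Node) : BT Node :=
  if s = [] then .leaf else T.forest s.dropLast (s.getLastD 0 + 1)

/-- The encoding of the subtrees rooted at `s` and its later siblings. -/
def sub (T : UTree A) (s : Node) : BT Node := .node s (T.forest s 0) (T.later s)

lemma later_nil (T : UTree A) : T.later [] = .leaf := rfl

lemma later_concat (T : UTree A) (u : Node) (i : ℕ) : T.later (u ++ [i]) = T.forest u (i + 1) := by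
  simp [later]

lemma forest_pos {T : UTree A} {u : Node} {i : ℕ} (h : u ++ [i] ∈ T.dom) :
    T.forest u i = T.sub (u ++ [i]) := by
  rw [forest, if_pos h, sub, later_concat]

lemma forest_neg {T : UTree A} {u : Node} {i : ℕ} (h : u ++ [i] ∉ T.dom) :
    T.forest u i = .leaf := by
  rw [forest, if_neg h]

/-- Induction along the recursion of `forest`. -/
lemma forest_ind (T : UTree A) {p : Node → ℕ → Prop}
    (pos : ∀ u i, u ++ [i] ∈ T.dom → p (u ++ [i]) 0 → p u (i + 1) → p u i)
    (neg : ∀ u i, u ++ [i] ∉ T.dom → p u i) (u : Node) (i : ℕ) : p u i := by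
  suffices h : ∀ n, ∀ u i, T.bound - (u.length + u.sum + i) ≤ n → p u i from h _ u i le_rfl
  intro n
  induction n with
  | zero =>
    intro u i h
    refine neg u i fun hm => ?_
    have := T.lt_bound hm
    simp at this
    omega
  | succ n ih =>
    intro u i h
    by_cases hm : u ++ [i] ∈ T.dom
    · have := T.lt_bound hm
      simp at this
      refine pos u i hm (ih _ _ ?_) (ih _ _ ?_)
      · simp; omega
      · omega
    · exact neg u i hm

lemma mem_dom_of_le {T : UTree A} {u : Node} {i j : ℕ} (h : u ++ [j] ∈ T.dom) (hij : i ≤ j) :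
    u ++ [i] ∈ T.dom := by
  rcases hij.lt_or_eq with h1 | rfl
  · exact T.sib_closed h h1
  · exact h

lemma prefix_cases {u t : Node} (h : u <+: t) : t = u ∨ ∃ j, u ++ [j] <+: t := by
  obtain ⟨w, rfl⟩ := h
  rcases w with _ | ⟨j, w⟩
  · simp
  · exact .inr ⟨j, w, by simp⟩

lemma prefix_inj {u t : Node} {i j : ℕ} (h : u ++ [i] <+: t) (h' : u ++ [j] <+: t) : i = j := by
  obtain ⟨w, rfl⟩ := h
  obtain ⟨w', h⟩ := h'
  simp at h
  exact h.1.symm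

lemma mem_forest (T : UTree A) (u : Node) (i : ℕ) (t : Node) :
    t ∈ (T.forest u i).toList ↔ t ∈ T.dom ∧ ∃ j, i ≤ j ∧ u ++ [j] <+: t := by
  induction u, i using T.forest_ind with
  | pos u i h ih1 ih2 =>
    rw [forest, if_pos h]
    simp only [BT.toList, List.mem_cons, List.mem_append, ih1, ih2]
    constructor
    · rintro (rfl | ⟨ht, j, -, hj⟩ | ⟨ht, j, hij, hj⟩)
      · exact ⟨h, i, le_rfl, List.prefix_rfl⟩
      · exact ⟨ht, i, le_rfl, (List.prefix_append _ _).trans hj⟩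
      · exact ⟨ht, j, by omega, hj⟩
    · rintro ⟨ht, j, hij, hj⟩
      rcases hij.lt_or_eq with h1 | rfl
      · exact .inr (.inr ⟨ht, j, h1, hj⟩)
      · rcases prefix_cases hj with h2 | ⟨k, hk⟩
        · exact .inl h2
        · exact .inr (.inl ⟨ht, k, Nat.zero_le _, hk⟩)
  | neg u i h =>
    rw [forest_neg h]
    simp only [BT.toList, List.not_mem_nil, false_iff]
    rintro ⟨ht, j, hij, hj⟩
    exact h (mem_dom_of_le (T.prefix_closed ht hj) hij)

lemma not_mem_forest (T : UTree A) (s : Node) (i : ℕ) : s ∉ (T.forest s i).toList := by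
  rw [mem_forest]
  rintro ⟨-, j, -, h⟩
  have := h.length_le
  simp at this

lemma not_mem_later (T : UTree A) (s : Node) : s ∉ (T.later s).toList := by
  rcases List.eq_nil_or_concat s with rfl | ⟨u, i, rfl⟩
  · simp [later_nil, BT.toList]
  · rw [List.concat_eq_append, later_concat, mem_forest]
    rintro ⟨-, j, hij, h⟩
    have := prefix_inj h List.prefix_rfl
    omega

lemma forest_later_disjoint (T : UTree A) (s t : Node) (h : t ∈ (T.forest s 0).toList)
    (h' : t ∈ (T.later s).toList) : False := by
  rcases List.eq_nil_or_concat s with rfl | ⟨u, i, rfl⟩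
  · simp [later_nil, BT.toList] at h'
  · rw [List.concat_eq_append] at *
    rw [later_concat, mem_forest] at h'
    rw [mem_forest] at h
    obtain ⟨-, j, -, h⟩ := h
    obtain ⟨-, k, hk, h'⟩ := h'
    have := prefix_inj ((List.prefix_append _ _).trans h) h'
    omega

lemma nodup_forest (T : UTree A) (u : Node) (i : ℕ) : (T.forest u i).toList.Nodup := by
  induction u, i using T.forest_ind with
  | pos u i h ih1 ih2 =>
    have h1 := T.not_mem_forest (u ++ [i]) 0
    have h2 := T.not_mem_later (u ++ [i])
    have h3 := T.forest_later_disjoint (u ++ [i])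
    rw [later_concat] at h2 h3
    rw [forest, if_pos h]
    simp only [BT.toList, List.nodup_cons, List.mem_append, List.nodup_append]
    refine ⟨not_or.2 ⟨h1, h2⟩, ih1, ih2, ?_⟩
    rintro a ha b hb rfl
    exact h3 a ha hb
  | neg u i h => rw [forest_neg h]; simp [BT.toList]

lemma mem_whole (T : UTree A) (t : Node) : t ∈ (T.sub []).toList ↔ t ∈ T.dom := by
  simp only [sub, later_nil, BT.toList, List.mem_cons, List.append_nil, mem_forest]
  constructor
  · rintro (rfl | h)
    · exact T.nil_mem
    · exact h.1
  · intro h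
    rcases prefix_cases (List.nil_prefix (l := t)) with h1 | ⟨j, hj⟩
    · exact .inl h1
    · exact .inr ⟨h, j, Nat.zero_le _, hj⟩

lemma nodup_whole (T : UTree A) : (T.sub []).toList.Nodup := by
  simp only [sub, later_nil, BT.toList, List.append_nil, List.nodup_cons]
  exact ⟨T.not_mem_forest [] 0, T.nodup_forest [] 0⟩

lemma desc_forest (T : UTree A) (u : Node) (i : ℕ) (s t : Node) :
    (T.forest u i).Desc s t ↔ s ∈ (T.forest u i).toList ∧ t ∈ T.dom ∧ s <+: t := by
  induction u, i using T.forest_ind with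
  | pos u i h ih1 ih2 =>
    rw [forest, if_pos h]
    simp only [BT.Desc, ih1, ih2, BT.toList, List.mem_cons, List.mem_append]
    constructor
    · rintro (⟨rfl, rfl | ht⟩ | ⟨h1, h2⟩ | ⟨h1, h2⟩)
      · exact ⟨.inl rfl, h, List.prefix_rfl⟩
      · obtain ⟨ht, j, -, hj⟩ := (T.mem_forest _ _ _).1 ht
        exact ⟨.inl rfl, ht, (List.prefix_append _ _).trans hj⟩
      · exact ⟨.inr (.inl h1), h2⟩
      · exact ⟨.inr (.inr h1), h2⟩
    · rintro ⟨rfl | h1 | h1, h2⟩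
      · refine .inl ⟨rfl, ?_⟩
        rcases prefix_cases h2.2 with h3 | ⟨j, hj⟩
        · exact .inl h3
        · exact .inr ((T.mem_forest _ _ _).2 ⟨h2.1, j, Nat.zero_le _, hj⟩)
      · exact .inr (.inl ⟨h1, h2⟩)
      · exact .inr (.inr ⟨h1, h2⟩)
  | neg u i h => rw [forest_neg h]; simp [BT.toList, BT.Desc]

lemma desc_whole (T : UTree A) (s t : Node) : (T.sub []).Desc s t ↔ T.descR s t := by
  have hm := T.mem_whole
  simp only [sub, later_nil, BT.Desc, desc_forest, or_false]
  simp only [sub, later_nil, BT.toList, List.mem_cons, List.append_nil] at hm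
  simp only [hm, UTree.descR]
  constructor
  · rintro (⟨rfl, h⟩ | ⟨h1, h2⟩)
    · exact ⟨T.nil_mem, h, List.nil_prefix⟩
    · exact ⟨(hm s).1 (.inr h1), h2⟩
  · rintro ⟨h1, h2⟩
    rcases (hm s).2 h1 with rfl | h3
    · exact .inl ⟨rfl, h2.1⟩
    · exact .inr ⟨h3, h2⟩

lemma top_forest (T : UTree A) (u : Node) (i : ℕ) (t : Node) :
    t ∈ (T.forest u i).top ↔ t ∈ T.dom ∧ ∃ j, i ≤ j ∧ t = u ++ [j] := by
  induction u, i using T.forest_ind with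
  | pos u i h ih1 ih2 =>
    rw [forest, if_pos h]
    simp only [BT.top, List.mem_cons, ih2]
    constructor
    · rintro (rfl | ⟨ht, j, hj, rfl⟩)
      · exact ⟨h, i, le_rfl, rfl⟩
      · exact ⟨ht, j, by omega, rfl⟩
    · rintro ⟨ht, j, hij, rfl⟩
      rcases hij.lt_or_eq with h1 | rfl
      · exact .inr ⟨ht, j, h1, rfl⟩
      · exact .inl rfl
  | neg u i h =>
    rw [forest_neg h]
    simp only [BT.top, List.not_mem_nil, false_iff]
    rintro ⟨ht, j, hij, rfl⟩
    exact h (mem_dom_of_le ht hij)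

lemma sibTop_forest (T : UTree A) (u : Node) (i : ℕ) (s t : Node) :
    (T.forest u i).SibTop s t ↔
      t ∈ T.dom ∧ ∃ j k, i ≤ j ∧ j ≤ k ∧ s = u ++ [j] ∧ t = u ++ [k] := by
  induction u, i using T.forest_ind with
  | pos u i h ih1 ih2 =>
    rw [forest, if_pos h]
    simp only [BT.SibTop, ih2, top_forest]
    constructor
    · rintro (⟨rfl, rfl | ⟨ht, j, hj, rfl⟩⟩ | ⟨ht, j, k, hj, hk, rfl, rfl⟩)
      · exact ⟨h, i, i, le_rfl, le_rfl, rfl, rfl⟩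
      · exact ⟨ht, i, j, le_rfl, by omega, rfl, rfl⟩
      · exact ⟨ht, j, k, by omega, hk, rfl, rfl⟩
    · rintro ⟨ht, j, k, hj, hk, rfl, rfl⟩
      rcases hj.lt_or_eq with h1 | rfl
      · exact .inr ⟨ht, j, k, h1, hk, rfl, rfl⟩
      · refine .inl ⟨rfl, ?_⟩
        rcases hk.lt_or_eq with h1 | rfl
        · exact .inr ⟨ht, k, h1, rfl⟩
        · exact .inl rfl
  | neg u i h =>
    rw [forest_neg h]
    simp only [BT.SibTop, false_iff]
    rintro ⟨ht, j, k, hj, hk, rfl, rfl⟩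
    exact h (mem_dom_of_le ht (hj.trans hk))

lemma sibIn_forest (T : UTree A) (u : Node) (i : ℕ) (s t : Node) :
    (T.forest u i).SibIn s t ↔
      t ∈ T.dom ∧ ∃ w j k, w ∈ (T.forest u i).toList ∧ j ≤ k ∧ s = w ++ [j] ∧ t = w ++ [k] := by
  induction u, i using T.forest_ind with
  | pos u i h ih1 ih2 =>
    rw [forest, if_pos h]
    simp only [BT.SibIn, ih1, ih2, sibTop_forest, BT.toList, List.mem_cons, List.mem_append]
    constructor
    · rintro (⟨ht, j, k, -, hk, rfl, rfl⟩ | ⟨ht, w, j, k, hw, hk⟩ | ⟨ht, w, j, k, hw, hk⟩)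
      · exact ⟨ht, _, j, k, .inl rfl, hk, rfl, rfl⟩
      · exact ⟨ht, w, j, k, .inr (.inl hw), hk⟩
      · exact ⟨ht, w, j, k, .inr (.inr hw), hk⟩
    · rintro ⟨ht, w, j, k, rfl | hw | hw, hk⟩
      · exact .inl ⟨ht, j, k, Nat.zero_le _, hk⟩
      · exact .inr (.inl ⟨ht, w, j, k, hw, hk⟩)
      · exact .inr (.inr ⟨ht, w, j, k, hw, hk⟩)
  | neg u i h => rw [forest_neg h]; simp [BT.toList, BT.SibIn]

lemma sibIn_whole (T : UTree A) (s t : Node) : (T.sub []).SibIn s t ↔ T.sibR s t := by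
  have hm := T.mem_whole
  simp only [sub, later_nil, BT.SibIn, sibIn_forest, sibTop_forest, or_false]
  simp only [sub, later_nil, BT.toList, List.mem_cons, List.append_nil] at hm
  constructor
  · rintro (⟨ht, j, k, -, hk, rfl, rfl⟩ | ⟨ht, w, j, k, hw, hk, rfl, rfl⟩)
    · exact ⟨mem_dom_of_le ht hk, ht, _, j, k, rfl, rfl, hk⟩
    · exact ⟨mem_dom_of_le ht hk, ht, _, j, k, rfl, rfl, hk⟩
  · rintro ⟨hs, ht, w, j, k, rfl, rfl, hk⟩
    rcases (hm w).2 (T.prefix_closed hs (List.prefix_append _ _)) with rfl | h3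
    · exact .inl ⟨ht, j, k, Nat.zero_le _, hk, rfl, rfl⟩
    · exact .inr ⟨ht, w, j, k, h3, hk, rfl, rfl⟩

end UTree

/-! ### From MSO to finite-state recognisability -/

section MSOToReg

variable {A : Type}

/-- Letters: the label of a node, the first-order variables denoting it, and the set variables
containing it. -/
abbrev Letter (A : Type) : Type := A × Set ℕ × Set ℕ

/-- The letters of `T` expanded by a valuation. -/
def letters (T : UTree A) (v : ℕ → Node) (V : ℕ → Set Node) (s : Node) : Letter A :=
  (T.label s, {n | v n = s}, {n | s ∈ V n})

/-- Recognisability does not distinguish letterings that agree on the tree. -/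
lemma Reg.congr {Γ : Type} {P : BT Node → (Node → Γ) → Prop} (h : Reg P) {t : BT Node}
    (ht : t.toList.Nodup) {c c' : Node → Γ} (hc : ∀ s ∈ t.toList, c s = c' s) :
    P t c ↔ P t c' := by
  obtain ⟨Q, hQ, q₀, δ, F, h⟩ := h
  rw [h t c ht, h t c' ht, run_congr q₀ δ t hc]

lemma reg_of_mso (φ : MSO A) :
    ∃ P : BT Node → (Node → Letter A) → Prop, Reg P ∧
      ∀ (T : UTree A) (v : ℕ → Node) (V : ℕ → Set Node), (∀ n, v n ∈ T.dom) →
        (MSO.Sat T v V φ ↔ P (T.sub []) (letters T v V)) := by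
  induction φ with
  | eq x y =>
    refine ⟨_, reg_exists fun γ => x ∈ γ.2.1 ∧ y ∈ γ.2.1, fun T v V hv => ?_⟩
    simp only [MSO.Sat, letters, Set.mem_ofPred_eq, T.mem_whole]
    exact ⟨fun h => ⟨v x, hv x, rfl, h.symm⟩, fun ⟨s, _, h1, h2⟩ => h1.trans h2.symm⟩
  | desc x y =>
    refine ⟨_, reg_desc (fun γ => x ∈ γ.2.1) (fun γ => y ∈ γ.2.1), fun T v V hv => ?_⟩
    simp only [MSO.Sat, letters, Set.mem_ofPred_eq, T.desc_whole]
    exact ⟨fun h => ⟨_, _, h, rfl, rfl⟩, by rintro ⟨s, t, h, rfl, rfl⟩; exact h⟩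
  | sib x y =>
    refine ⟨_, reg_sib (fun γ => x ∈ γ.2.1) (fun γ => y ∈ γ.2.1), fun T v V hv => ?_⟩
    simp only [MSO.Sat, letters, Set.mem_ofPred_eq, T.sibIn_whole]
    exact ⟨fun h => ⟨_, _, h, rfl, rfl⟩, by rintro ⟨s, t, h, rfl, rfl⟩; exact h⟩
  | lab a x =>
    refine ⟨_, reg_exists fun γ => x ∈ γ.2.1 ∧ γ.1 = a, fun T v V hv => ?_⟩
    simp only [MSO.Sat, letters, Set.mem_ofPred_eq, T.mem_whole]
    exact ⟨fun h => ⟨v x, hv x, rfl, h.2⟩, by rintro ⟨s, h1, rfl, h2⟩; exact ⟨h1, h2⟩⟩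
  | mem X x =>
    refine ⟨_, reg_exists fun γ => x ∈ γ.2.1 ∧ X ∈ γ.2.2, fun T v V hv => ?_⟩
    simp only [MSO.Sat, letters, Set.mem_ofPred_eq, T.mem_whole]
    exact ⟨fun h => ⟨v x, hv x, rfl, h⟩, by rintro ⟨s, h1, rfl, h2⟩; exact h2⟩
  | not φ ih =>
    obtain ⟨P, hP, h⟩ := ih
    exact ⟨_, hP.not, fun T v V hv => by simp only [MSO.Sat, h T v V hv]⟩
  | and φ ψ ih1 ih2 =>
    obtain ⟨P, hP, h⟩ := ih1
    obtain ⟨P', hP', h'⟩ := ih2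
    exact ⟨_, hP.and hP', fun T v V hv => by simp only [MSO.Sat, h T v V hv, h' T v V hv]⟩
  | exFO n φ ih =>
    obtain ⟨P, hP, h⟩ := ih
    -- guess a placement of `n` and check that exactly one node carries it
    refine ⟨_, ((hP.and (reg_exists fun γ => n ∈ γ.2.1)).and
      (reg_two fun γ => n ∈ γ.2.1).not).proj
      (fun γ γ' => γ.1 = γ'.1 ∧ γ.2.2 = γ'.2.2 ∧ ∀ m, m ≠ n → (m ∈ γ.2.1 ↔ m ∈ γ'.2.1))
      (fun γ => ⟨rfl, rfl, fun _ _ => Iff.rfl⟩), fun T v V hv => ?_⟩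
    have hv' : ∀ s ∈ T.dom, ∀ m, Function.update v n s m ∈ T.dom := by
      intro s hs m
      by_cases hm : m = n
      · subst hm; simpa using hs
      · simpa [Function.update_of_ne hm] using hv m
    simp only [MSO.Sat]
    constructor
    · rintro ⟨s, hs, h1⟩
      refine ⟨letters T (Function.update v n s) V, fun t => ⟨rfl, rfl, fun m hm => ?_⟩,
        ⟨(h _ _ _ (hv' s hs)).1 h1, s, (T.mem_whole s).2 hs, ?_⟩, ?_⟩
      · simp [letters, Function.update_of_ne hm]
      · simp [letters]
      · rintro ⟨t, -, t', -, hne, h1, h2⟩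
        simp [letters] at h1 h2
        exact hne (h1.symm.trans h2)
    · rintro ⟨c', hc', ⟨h1, s, hs, hns⟩, h2⟩
      have hs' := (T.mem_whole s).1 hs
      refine ⟨s, hs', (h _ _ _ (hv' s hs')).2 ?_⟩
      refine (hP.congr T.nodup_whole fun t ht => ?_).1 h1
      obtain ⟨e1, e2, e3⟩ := hc' t
      refine Prod.ext e1.symm (Prod.ext ?_ e2.symm)
      ext m
      by_cases hm : m = n
      · subst hm
        simp only [letters, Set.mem_ofPred_eq, Function.update_self]
        constructor
        · intro h3
          by_contra hc
          exact h2 ⟨s, hs, t, ht, hc, hns, h3⟩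
        · rintro rfl
          exact hns
      · rw [← e3 m hm]
        simp [letters, Function.update_of_ne hm]
  | exSO n φ ih =>
    obtain ⟨P, hP, h⟩ := ih
    refine ⟨_, hP.proj
      (fun γ γ' => γ.1 = γ'.1 ∧ γ.2.1 = γ'.2.1 ∧ ∀ m, m ≠ n → (m ∈ γ.2.2 ↔ m ∈ γ'.2.2))
      (fun γ => ⟨rfl, rfl, fun _ _ => Iff.rfl⟩), fun T v V hv => ?_⟩
    simp only [MSO.Sat]
    constructor
    · rintro ⟨S, hS, h1⟩
      refine ⟨letters T v (Function.update V n S), fun t => ⟨rfl, rfl, fun m hm => ?_⟩,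
        (h _ _ _ hv).1 h1⟩
      simp [letters, Function.update_of_ne hm]
    · rintro ⟨c', hc', h1⟩
      refine ⟨{s | s ∈ T.dom ∧ n ∈ (c' s).2.2}, fun s hs => hs.1, (h _ _ _ hv).2 ?_⟩
      refine (hP.congr T.nodup_whole fun t ht => ?_).1 h1
      obtain ⟨e1, e2, e3⟩ := hc' t
      refine Prod.ext e1.symm (Prod.ext e2.symm ?_)
      ext m
      by_cases hm : m = n
      · subst hm
        simp [letters, (T.mem_whole t).1 ht]
      · rw [← e3 m hm]
        simp [letters, Function.update_of_ne hm]

/-- An MSO query is decided by an automaton reading labels and a mark for the current node. -/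
lemma automaton_of_mso {φ : MSO A} {Q : UTree A → Set Node} (hφ : φ.DefinesU Q) :
    ∃ (S : Type) (_ : Finite S) (q₀ : S) (δ : A → Prop → S → S → S) (F : Set S),
      ∀ (T : UTree A) (s : Node), s ∈ T.dom →
        (s ∈ Q T ↔ run q₀ (fun γ : A × Prop => δ γ.1 γ.2) (fun t => (T.label t, t = s))
          (T.sub []) ∈ F) := by
  obtain ⟨P, ⟨S, hS, q₀, δ, F, hδ⟩, h⟩ := reg_of_mso φ
  refine ⟨S, hS, q₀, fun a b => δ (a, {_n | b}, ∅), F, fun T s hs => ?_⟩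
  have h1 := hφ T (fun _ => s) (fun _ => ∅) s hs
  rw [Function.update_eq_self, h T _ _ fun _ => hs, hδ _ _ T.nodup_whole] at h1
  rw [h1]
  have key : ∀ t : BT Node, run q₀ δ (letters T (fun _ => s) fun _ => ∅) t =
      run q₀ (fun γ : A × Prop => δ (γ.1, {_n | γ.2}, ∅)) (fun t => (T.label t, t = s)) t := by
    intro t
    induction t with
    | leaf => rfl
    | node a l r ihl ihr =>
      simp only [run, ihl, ihr]
      congr 1
      simp [letters, eq_comm]
  rw [key]

end MSOToReg

/-! ### Derived connectives -/

namespace MuForm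

variable {A R : Type}

/-- The false formula `μX.X`. -/
def ff : MuForm A R := .mu 0 (.var 0)

def tt : MuForm A R := .not ff

def conj (φ ψ : MuForm A R) : MuForm A R := .not (.or (.not φ) (.not ψ))

/-- The formula `φ` if the condition `p` on the automaton holds, else falsity. -/
noncomputable def guard (p : Prop) (φ : MuForm A R) : MuForm A R :=
  open Classical in if p then φ else ff

/-- Finite disjunction. -/
noncomputable def any {ι : Type} [Finite ι] (f : ι → MuForm A R) : MuForm A R :=
  ((Set.toFinite (Set.univ : Set ι)).toFinset.toList.map f).foldr .or ff

/-- Well-formed and positive in the variable `n`. -/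
def Ok (n : ℕ) (φ : MuForm A R) : Prop := φ.WF ∧ φ.pol n true

variable {T : UTree A} {rel : R → Node → Node → Prop} {V : ℕ → Set Node} {s : Node} {n : ℕ}

lemma mem_ff : s ∈ (ff : MuForm A R).sem T rel V ↔ False := by
  simp only [ff, sem, Function.update_self, Set.mem_ofPred_eq, iff_false]
  intro h
  exact h ∅ le_rfl

lemma mem_tt : s ∈ (tt : MuForm A R).sem T rel V ↔ s ∈ T.dom := by
  simp [tt, sem.eq_4, mem_ff]

lemma mem_conj {φ ψ : MuForm A R} : s ∈ (conj φ ψ).sem T rel V ↔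
    s ∈ T.dom ∧ s ∈ φ.sem T rel V ∧ s ∈ ψ.sem T rel V := by
  simp only [conj, sem, Set.mem_ofPred_eq, Set.mem_union]
  tauto

lemma mem_guard {p : Prop} {φ : MuForm A R} : s ∈ (guard p φ).sem T rel V ↔
    p ∧ s ∈ φ.sem T rel V := by
  unfold guard
  split_ifs with h <;> simp [h, mem_ff]

lemma mem_any {ι : Type} [Finite ι] {f : ι → MuForm A R} : s ∈ (any f).sem T rel V ↔
    ∃ i, s ∈ (f i).sem T rel V := by
  have : ∀ l : List ι, s ∈ ((l.map f).foldr .or ff).sem T rel V ↔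
      ∃ i ∈ l, s ∈ (f i).sem T rel V := by
    intro l
    induction l with
    | nil => simp [mem_ff]
    | cons a l ih =>
      simp only [List.map_cons, List.foldr_cons, sem, Set.mem_union, ih]
      simp
  simp [any, this]

lemma ok_ff : Ok n (ff : MuForm A R) := ⟨⟨.inl rfl, trivial⟩, .inr (.inl rfl)⟩

lemma ok_tt (b : Bool) : (tt : MuForm A R).WF ∧ (tt : MuForm A R).pol n b := by
  refine ⟨⟨.inl rfl, trivial⟩, ?_⟩
  simp only [tt, ff, pol]
  tauto

lemma Ok.conj {φ ψ : MuForm A R} (h : Ok n φ) (h' : Ok n ψ) : Ok n (conj φ ψ) :=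
  ⟨⟨h.1, h'.1⟩, ⟨h.2, h'.2⟩⟩

lemma Ok.or {φ ψ : MuForm A R} (h : Ok n φ) (h' : Ok n ψ) : Ok n (.or φ ψ) :=
  ⟨⟨h.1, h'.1⟩, ⟨h.2, h'.2⟩⟩

lemma Ok.dia {φ : MuForm A R} (h : Ok n φ) (r : R) : Ok n (.dia r φ) := h

lemma Ok.diaB {φ : MuForm A R} (h : Ok n φ) (r : R) : Ok n (.diaB r φ) := h

lemma ok_lab (a : A) : Ok n (.lab a : MuForm A R) := ⟨trivial, trivial⟩

lemma ok_no_dia (r : R) : Ok n (.not (.dia r tt) : MuForm A R) := ok_tt false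

lemma ok_no_diaB (r : R) : Ok n (.not (.diaB r tt) : MuForm A R) := ok_tt false

lemma Ok.guard {φ : MuForm A R} (h : Ok n φ) (p : Prop) : Ok n (guard p φ) := by
  unfold MuForm.guard
  split_ifs
  · exact h
  · exact ok_ff

lemma ok_any {ι : Type} [Finite ι] {f : ι → MuForm A R} (h : ∀ i, Ok n (f i)) : Ok n (any f) := by
  unfold any
  generalize (Set.toFinite (Set.univ : Set ι)).toFinset.toList = l
  induction l with
  | nil => exact ok_ff
  | cons a l ih => exact (h a).or ih

end MuForm

/-! ### Simultaneous least fixed points in the μ-calculus -/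

section Vectorial

variable {A R I : Type}

/-- `sys X i` is the `i`-th right-hand side of a system of fixed-point equations in which the
unknowns have been replaced by the formulas `X`. The substitution must preserve well-formedness
and positivity. -/
def IsSystem (sys : (I → MuForm A R) → I → MuForm A R) : Prop :=
  ∀ n X, (∀ i, (X i).Ok n) → ∀ i, (sys X i).Ok n

/-- Solution of a system of equations by successive elimination of unknowns (Bekić). The unknowns
in `S` are kept as variables; `k` bounds the number of the others. -/
noncomputable def sol (e : I → ℕ) (sys : (I → MuForm A R) → I → MuForm A R) :
    ℕ → Set I → I → MuForm A R
  | 0, _, i => .var (e i)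
  | k + 1, S, i =>
    open Classical in
    if i ∈ S then .var (e i) else .mu (e i) (sys (sol e sys k (insert i S)) i)

lemma sol_ok {e : I → ℕ} {sys : (I → MuForm A R) → I → MuForm A R} (h : IsSystem sys) :
    ∀ k S i n, (sol e sys k S i).Ok n
  | 0, S, i, n => ⟨trivial, .inl rfl⟩
  | k + 1, S, i, n => by
    rw [sol]
    split_ifs
    · exact ⟨trivial, .inl rfl⟩
    · have key := fun n => h n (sol e sys k (insert i S))
        (fun j => sol_ok (e := e) h k (insert i S) j n) i
      exact ⟨⟨(key _).2, (key n).1⟩, .inr (key n).2⟩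

/-- Least family of sets that contains `W` at the indices in `S` and is closed under `Φ` at the
others. -/
def leastFam (Φ : (I → Set Node) → I → Set Node) (S : Set I) (W : I → Set Node) (i : I) :
    Set Node :=
  {s | ∀ X : I → Set Node, (∀ j ∈ S, W j ⊆ X j) → (∀ j, j ∉ S → Φ X j ⊆ X j) → s ∈ X i}

lemma leastFam_le {Φ : (I → Set Node) → I → Set Node} {S : Set I} {W X : I → Set Node}
    (h1 : ∀ j ∈ S, W j ⊆ X j) (h2 : ∀ j, j ∉ S → Φ X j ⊆ X j) : leastFam Φ S W ≤ X :=
  fun _ _ hs => hs X h1 h2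

lemma leastFam_mem {Φ : (I → Set Node) → I → Set Node} {S : Set I} {W : I → Set Node}
    {i : I} (hi : i ∈ S) : W i ⊆ leastFam Φ S W i :=
  fun _ hs _ h1 _ => h1 i hi hs

lemma leastFam_closed {Φ : (I → Set Node) → I → Set Node} (hΦ : Monotone Φ) {S : Set I}
    {W : I → Set Node} {i : I} (hi : i ∉ S) :
    Φ (leastFam Φ S W) i ⊆ leastFam Φ S W i :=
  fun _ hs _ h1 h2 => h2 i hi (hΦ (leastFam_le h1 h2) i hs)

open Classical in
lemma leastFam_eq_of_mem {Φ : (I → Set Node) → I → Set Node} {S : Set I}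
    {W : I → Set Node} {i : I} (hi : i ∈ S) : leastFam Φ S W i = W i := by
  refine Set.Subset.antisymm (fun s hs => ?_) (leastFam_mem hi)
  have := hs (Function.update (fun _ => Set.univ) i (W i)) ?_ ?_
  · simpa using this
  · intro j _
    by_cases h : j = i
    · subst h; simp
    · simp [Function.update_of_ne h]
  · intro j hj
    have h : j ≠ i := fun h => hj (h ▸ hi)
    simp [Function.update_of_ne h]

open Classical in
/-- Bekić's principle: one component of a simultaneous least fixed point is an ordinary least
fixed point. -/
lemma leastFam_bekic {Φ : (I → Set Node) → I → Set Node} (hΦ : Monotone Φ) {S : Set I}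
    {W : I → Set Node} {i : I} (hi : i ∉ S) :
    leastFam Φ S W i =
      {s | ∀ P : Set Node, Φ (leastFam Φ (insert i S) (Function.update W i P)) i ⊆ P → s ∈ P} := by
  have hup : ∀ P, ∀ j ∈ S, Function.update W i P j = W j := fun P j hj =>
    Function.update_of_ne (fun h : j = i => hi (h ▸ hj)) _ _
  apply Set.Subset.antisymm
  · intro s hs P hP
    have e : leastFam Φ (insert i S) (Function.update W i P) i = P := by
      rw [leastFam_eq_of_mem (Set.mem_insert _ _), Function.update_self]
    have := hs (leastFam Φ (insert i S) (Function.update W i P)) ?_ ?_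
    · rwa [e] at this
    · intro j hj
      have := leastFam_mem (Φ := Φ) (W := Function.update W i P) (Set.mem_insert_of_mem i hj)
      rwa [hup P j hj] at this
    · intro j hj
      by_cases h : j = i
      · subst h; rwa [e]
      · exact leastFam_closed hΦ (by simp [h, hj])
  · intro s hs
    refine hs _ ((hΦ (leastFam_le ?_ ?_) i).trans (leastFam_closed hΦ hi))
    · intro j hj
      by_cases h : j = i
      · subst h; simp
      · have hjS : j ∈ S := by simpa [h] using hj
        rw [hup _ j hjS]
        exact leastFam_mem hjS
    · intro j hj
      exact leastFam_closed hΦ fun h => hj (Set.mem_insert_of_mem i h)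

lemma sem_sol [Finite I] {e : I → ℕ} (he : Function.Injective e)
    {sys : (I → MuForm A R) → I → MuForm A R} {T : UTree A} {rel : R → Node → Node → Prop}
    {Φ : (I → Set Node) → I → Set Node} (hΦ : Monotone Φ)
    (hsem : ∀ X V i, (sys X i).sem T rel V = Φ (fun j => (X j).sem T rel V) i) :
    ∀ (k : ℕ) (S : Set I), Sᶜ.ncard ≤ k → ∀ (V : ℕ → Set Node) (i : I),
      (sol e sys k S i).sem T rel V = leastFam Φ S (fun j => V (e j)) i := by
  classical
  intro k
  induction k with
  | zero =>
    intro S hS V i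
    have : i ∈ S := by
      by_contra hc
      have h0 : Sᶜ = ∅ := (Set.ncard_eq_zero (Set.toFinite _)).1 (by omega)
      have : i ∈ Sᶜ := hc
      simp [h0] at this
    rw [leastFam_eq_of_mem this]
    rfl
  | succ k ih =>
    intro S hS V i
    rw [sol]
    split_ifs with hi
    · rw [leastFam_eq_of_mem hi]
      rfl
    · have hcard : (insert i S)ᶜ.ncard ≤ k := by
        have : (insert i S)ᶜ ⊂ Sᶜ := by
          refine ⟨Set.compl_subset_compl.2 (Set.subset_insert _ _), fun h => ?_⟩
          exact h hi (Set.mem_insert _ _)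
        have := Set.ncard_lt_ncard this (Set.toFinite _)
        omega
      rw [leastFam_bekic hΦ hi]
      simp only [MuForm.sem, hsem, ih _ hcard]
      have : ∀ P, (fun j => Function.update V (e i) P (e j)) =
          Function.update (fun j => V (e j)) i P := by
        intro P
        funext j
        by_cases h : j = i
        · subst h; simp
        · rw [Function.update_of_ne h, Function.update_of_ne (he.ne h)]
      simp only [this]

end Vectorial

/-! ### Evaluating an automaton in the μ-calculus -/

section Evaluate

open MuForm

variable {A S : Type}

/-- Unknowns of the system: `st q` (the unmarked run reaches `q` at the current node), `ctx f`
(the tree is accepted iff the current node is given a state in `f`), and `out` (the query). -/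
abbrev Ix (S : Type) : Type := Option (S ⊕ Set S)

abbrev Ix.st (q : S) : Ix S := some (.inl q)
abbrev Ix.ctx (f : Set S) : Ix S := some (.inr f)
abbrev Ix.out : Ix S := none

/-- No previous sibling. -/
def firstF : MuForm A ChNs := .not (.diaB .ns tt)

/-- The state of the forest of children is `l`. -/
noncomputable def fcF (q₀ : S) (X : Ix S → MuForm A ChNs) (l : S) : MuForm A ChNs :=
  .or (.dia .ch (conj firstF (X (.st l)))) (guard (l = q₀) (.not (.dia .ch tt)))

/-- The state of the forest of later siblings is `r`. -/
noncomputable def nsF (q₀ : S) (X : Ix S → MuForm A ChNs) (r : S) : MuForm A ChNs :=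
  .or (.dia .ns (X (.st r))) (guard (r = q₀) (.not (.dia .ns tt)))

/-- The fixed-point system evaluating the automaton: states bottom-up, contexts top-down. -/
noncomputable def evalSys [Finite A] [Finite S] (q₀ : S) (δ : A → Prop → S → S → S) (F : Set S)
    (X : Ix S → MuForm A ChNs) : Ix S → MuForm A ChNs
  | some (.inl q) => any fun a => any fun l => any fun r =>
      guard (δ a False l r = q) (conj (.lab a) (conj (fcF q₀ X l) (nsF q₀ X r)))
  | some (.inr f) =>
      .or (guard (f = F) (.not (.diaB .ch tt)))
      (.or (any fun a => any fun g => any fun r => guard (f = {q | δ a False q r ∈ g})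
          (conj firstF (.diaB .ch (conj (.lab a) (conj (X (.ctx g)) (nsF q₀ X r))))))
        (any fun a => any fun g => any fun l => guard (f = {q | δ a False l q ∈ g})
          (.diaB .ns (conj (.lab a) (conj (X (.ctx g)) (fcF q₀ X l))))))
  | none => any fun a => any fun l => any fun r => any fun f =>
      guard (δ a True l r ∈ f)
        (conj (.lab a) (conj (X (.ctx f)) (conj (fcF q₀ X l) (nsF q₀ X r))))

lemma evalSys_isSystem [Finite A] [Finite S] (q₀ : S) (δ : A → Prop → S → S → S) (F : Set S) :
    IsSystem (evalSys q₀ δ F) := by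
  intro n X hX i
  have hfirst : Ok n (firstF : MuForm A ChNs) := ok_no_diaB _
  have hfc : ∀ l, Ok n (fcF q₀ X l) := fun l =>
    ((hfirst.conj (hX _)).dia _).or ((ok_no_dia _).guard _)
  have hns : ∀ l, Ok n (nsF q₀ X l) := fun l => ((hX _).dia _).or ((ok_no_dia _).guard _)
  rcases i with _ | q | f
  · exact ok_any fun a => ok_any fun l => ok_any fun r => ok_any fun f =>
      ((ok_lab a).conj ((hX _).conj ((hfc l).conj (hns r)))).guard _
  · exact ok_any fun a => ok_any fun l => ok_any fun r =>
      ((ok_lab a).conj ((hfc l).conj (hns r))).guard _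
  · refine ((ok_no_diaB _).guard _).or (.or ?_ ?_)
    · exact ok_any fun a => ok_any fun g => ok_any fun r =>
        (hfirst.conj (((ok_lab a).conj ((hX _).conj (hns r))).diaB _)).guard _
    · exact ok_any fun a => ok_any fun g => ok_any fun l =>
        (((ok_lab a).conj ((hX _).conj (hfc l))).diaB _).guard _

/-- Semantics of `fcF`. -/
def FC (T : UTree A) (q₀ : S) (X : Ix S → Set Node) (l : S) (s : Node) : Prop :=
  (s ++ [0] ∈ T.dom ∧ s ++ [0] ∈ X (.st l)) ∨ (l = q₀ ∧ s ++ [0] ∉ T.dom)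

/-- Semantics of `nsF`. -/
def NS (T : UTree A) (q₀ : S) (X : Ix S → Set Node) (r : S) (s : Node) : Prop :=
  (∃ t, T.nsR s t ∧ t ∈ X (.st r)) ∨ (r = q₀ ∧ ¬ ∃ t, T.nsR s t)

/-- The monotone operator denoted by `evalSys`. -/
def evalOp (T : UTree A) (q₀ : S) (δ : A → Prop → S → S → S) (F : Set S)
    (X : Ix S → Set Node) : Ix S → Set Node
  | some (.inl q) => {s | s ∈ T.dom ∧
      ∃ l r, δ (T.label s) False l r = q ∧ FC T q₀ X l s ∧ NS T q₀ X r s}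
  | some (.inr f) => {s | s ∈ T.dom ∧ ((f = F ∧ s = []) ∨
      (∃ g r u, f = {q | δ (T.label u) False q r ∈ g} ∧ u ∈ T.dom ∧ s = u ++ [0] ∧
        u ∈ X (.ctx g) ∧ NS T q₀ X r u) ∨
      (∃ g l t, f = {q | δ (T.label t) False l q ∈ g} ∧ T.nsR t s ∧
        t ∈ X (.ctx g) ∧ FC T q₀ X l t))}
  | none => {s | s ∈ T.dom ∧ ∃ l r f, δ (T.label s) True l r ∈ f ∧
      s ∈ X (.ctx f) ∧ FC T q₀ X l s ∧ NS T q₀ X r s}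

lemma FC.mono {T : UTree A} {q₀ : S} {X Y : Ix S → Set Node} (h : X ≤ Y) {l : S} {s : Node} :
    FC T q₀ X l s → FC T q₀ Y l s := by
  rintro (⟨h1, h2⟩ | h1)
  · exact .inl ⟨h1, h _ h2⟩
  · exact .inr h1

lemma NS.mono {T : UTree A} {q₀ : S} {X Y : Ix S → Set Node} (h : X ≤ Y) {l : S} {s : Node} :
    NS T q₀ X l s → NS T q₀ Y l s := by
  rintro (⟨t, h1, h2⟩ | h1)
  · exact .inl ⟨t, h1, h _ h2⟩
  · exact .inr h1

lemma evalOp_mono (T : UTree A) (q₀ : S) (δ : A → Prop → S → S → S) (F : Set S) :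
    Monotone (evalOp T q₀ δ F) := by
  intro X Y h i s
  rcases i with _ | q | f
  · rintro ⟨hs, l, r, f, h1, h2, h3, h4⟩
    exact ⟨hs, l, r, f, h1, h _ h2, h3.mono h, h4.mono h⟩
  · rintro ⟨hs, l, r, h1, h3, h4⟩
    exact ⟨hs, l, r, h1, h3.mono h, h4.mono h⟩
  · rintro ⟨hs, h1 | ⟨g, r, u, h1, h2, h3, h4, h5⟩ | ⟨g, l, t, h1, h2, h3, h4⟩⟩
    · exact ⟨hs, .inl h1⟩
    · exact ⟨hs, .inr (.inl ⟨g, r, u, h1, h2, h3, h _ h4, h5.mono h⟩)⟩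
    · exact ⟨hs, .inr (.inr ⟨g, l, t, h1, h2, h _ h3, h4.mono h⟩)⟩

lemma mem_firstF {T : UTree A} {V : ℕ → Set Node} {s : Node} :
    s ∈ (firstF : MuForm A ChNs).sem T (ChNs.rel T) V ↔ s ∈ T.dom ∧ ¬ ∃ t, T.nsR t s := by
  simp only [firstF, sem.eq_4, sem.eq_6, mem_tt, Set.mem_ofPred_eq, ChNs.rel]
  constructor
  · rintro ⟨h1, h2⟩
    exact ⟨h1, fun ⟨t, ht⟩ => h2 ⟨h1, t, ht, ht.1⟩⟩
  · rintro ⟨h1, h2⟩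
    exact ⟨h1, fun ⟨_, t, ht, _⟩ => h2 ⟨t, ht⟩⟩

lemma first_child {T : UTree A} {s t : Node} :
    (T.childR s t ∧ ¬ ∃ t', T.nsR t' t) ↔ s ∈ T.dom ∧ t ∈ T.dom ∧ t = s ++ [0] := by
  constructor
  · rintro ⟨⟨hs, ht, i, rfl⟩, h⟩
    refine ⟨hs, ht, ?_⟩
    rcases i with _ | i
    · rfl
    · exact absurd ⟨s ++ [i], T.sib_closed ht (by omega), ht, s, i, rfl, rfl⟩ h
  · rintro ⟨hs, ht, rfl⟩
    refine ⟨⟨hs, ht, 0, rfl⟩, ?_⟩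
    rintro ⟨t', -, -, u, i, rfl, h⟩
    simp at h

lemma mem_fcF {T : UTree A} {V : ℕ → Set Node} {q₀ : S} {X : Ix S → MuForm A ChNs} {l : S}
    {s : Node} (hs : s ∈ T.dom) : s ∈ (fcF q₀ X l).sem T (ChNs.rel T) V ↔
      FC T q₀ (fun j => (X j).sem T (ChNs.rel T) V) l s := by
  simp only [fcF, sem.eq_3, sem.eq_4, sem.eq_5, Set.mem_union, mem_guard, mem_conj, mem_tt,
    mem_firstF, Set.mem_ofPred_eq, ChNs.rel, FC]
  refine or_congr ?_ (and_congr_right fun _ => ?_)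
  · constructor
    · rintro ⟨-, t, h1, h2, h3, h4⟩
      obtain ⟨-, h5, rfl⟩ := first_child.1 ⟨h1, h3.2⟩
      exact ⟨h5, h4⟩
    · rintro ⟨h1, h2⟩
      obtain ⟨h3, h4⟩ := first_child.2 ⟨hs, h1, rfl⟩
      exact ⟨hs, _, h3, h1, ⟨h1, h4⟩, h2⟩
  · constructor
    · rintro ⟨-, h⟩ h0
      exact h ⟨hs, _, ⟨hs, h0, 0, rfl⟩, h0⟩
    · intro h
      refine ⟨hs, ?_⟩
      rintro ⟨-, t, ⟨-, ht, i, rfl⟩, -⟩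
      exact h (UTree.mem_dom_of_le ht (Nat.zero_le _))

lemma mem_nsF {T : UTree A} {V : ℕ → Set Node} {q₀ : S} {X : Ix S → MuForm A ChNs} {r : S}
    {s : Node} (hs : s ∈ T.dom) : s ∈ (nsF q₀ X r).sem T (ChNs.rel T) V ↔
      NS T q₀ (fun j => (X j).sem T (ChNs.rel T) V) r s := by
  simp only [nsF, sem.eq_3, sem.eq_4, sem.eq_5, Set.mem_union, mem_guard, mem_tt,
    Set.mem_ofPred_eq, ChNs.rel, NS, hs, true_and]
  refine or_congr Iff.rfl (and_congr_right fun _ => not_congr ?_)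
  exact ⟨fun ⟨t, ht, _⟩ => ⟨t, ht⟩, fun ⟨t, ht⟩ => ⟨t, ht, ht.2.1⟩⟩

lemma sem_evalSys [Finite A] [Finite S] (q₀ : S) (δ : A → Prop → S → S → S) (F : Set S)
    (T : UTree A) (X : Ix S → MuForm A ChNs) (V : ℕ → Set Node) (i : Ix S) :
    (evalSys q₀ δ F X i).sem T (ChNs.rel T) V =
      evalOp T q₀ δ F (fun j => (X j).sem T (ChNs.rel T) V) i := by
  ext s
  rcases i with _ | q | f
  · simp only [evalSys, evalOp, mem_any, mem_guard, mem_conj, sem.eq_1, Set.mem_ofPred_eq]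
    constructor
    · rintro ⟨a, l, r, f, h1, hs, ⟨-, rfl⟩, -, h2, -, h3, h4⟩
      exact ⟨hs, l, r, f, h1, h2, (mem_fcF hs).1 h3, (mem_nsF hs).1 h4⟩
    · rintro ⟨hs, l, r, f, h1, h2, h3, h4⟩
      exact ⟨_, l, r, f, h1, hs, ⟨hs, rfl⟩, hs, h2, hs, (mem_fcF hs).2 h3, (mem_nsF hs).2 h4⟩
  · simp only [evalSys, evalOp, mem_any, mem_guard, mem_conj, sem.eq_1, Set.mem_ofPred_eq]
    constructor
    · rintro ⟨a, l, r, h1, hs, ⟨-, rfl⟩, -, h3, h4⟩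
      exact ⟨hs, l, r, h1, (mem_fcF hs).1 h3, (mem_nsF hs).1 h4⟩
    · rintro ⟨hs, l, r, h1, h3, h4⟩
      exact ⟨_, l, r, h1, hs, ⟨hs, rfl⟩, hs, (mem_fcF hs).2 h3, (mem_nsF hs).2 h4⟩
  · simp only [evalSys, evalOp, mem_any, mem_guard, mem_conj, sem.eq_1, sem.eq_3, sem.eq_4,
      sem.eq_6, mem_firstF, mem_tt, Set.mem_union, Set.mem_ofPred_eq, ChNs.rel]
    constructor
    · rintro (⟨h1, hs, h2⟩ | ⟨a, g, r, h1, hs, ⟨-, h2⟩, -, u, h3, hu, ⟨-, rfl⟩, -, h4, h5⟩ |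
        ⟨a, g, l, h1, hs, u, h3, hu, ⟨-, rfl⟩, -, h4, h5⟩)
      · refine ⟨hs, .inl ⟨h1, ?_⟩⟩
        rcases List.eq_nil_or_concat s with h | ⟨u, i, rfl⟩
        · exact h
        · rw [List.concat_eq_append] at *
          have hu := T.prefix_closed hs (List.prefix_append _ _)
          exact absurd ⟨hs, u, ⟨hu, hs, i, rfl⟩, hu⟩ h2
      · obtain ⟨-, -, h6⟩ := first_child.1 ⟨h3, h2⟩
        exact ⟨hs, .inr (.inl ⟨g, r, u, h1, hu, h6, h4, (mem_nsF hu).1 h5⟩)⟩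
      · exact ⟨hs, .inr (.inr ⟨g, l, u, h1, h3, h4, (mem_fcF hu).1 h5⟩)⟩
    · rintro ⟨hs, ⟨h1, rfl⟩ | ⟨g, r, u, h1, hu, h3, h4, h5⟩ | ⟨g, l, t, h1, h2, h4, h5⟩⟩
      · refine .inl ⟨h1, hs, ?_⟩
        rintro ⟨-, t, ⟨-, -, i, hi⟩, -⟩
        simp at hi
      · obtain ⟨h6, h7⟩ := first_child.2 ⟨hu, hs, h3⟩
        exact .inr (.inl ⟨_, g, r, h1, hs, ⟨hs, h7⟩, hs, u, h6, hu, ⟨hu, rfl⟩, hu, h4,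
          (mem_nsF hu).2 h5⟩)
      · have ht := h2.1
        exact .inr (.inr ⟨_, g, l, h1, hs, t, h2, ht, ⟨ht, rfl⟩, ht, h4, (mem_fcF ht).2 h5⟩)

/-- Run of the automaton when the marked nodes are those in `M`. -/
def mrun (T : UTree A) (q₀ : S) (δ : A → Prop → S → S → S) (M : Node → Prop) (t : BT Node) : S :=
  run q₀ (fun γ : A × Prop => δ γ.1 γ.2) (fun t => (T.label t, M t)) t

/-- `Ctx s f`: if no node is marked outside the subtrees of `s` and its later siblings, the
automaton accepts iff its state at `s` belongs to `f`. -/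
inductive Ctx (T : UTree A) (q₀ : S) (δ : A → Prop → S → S → S) (F : Set S) :
    Node → Set S → Prop
  | root : Ctx T q₀ δ F [] F
  | fc {s : Node} {g : Set S} : s ++ [0] ∈ T.dom → Ctx T q₀ δ F s g → Ctx T q₀ δ F (s ++ [0])
      {q | δ (T.label s) False q (mrun T q₀ δ (fun _ => False) (T.later s)) ∈ g}
  | ns {u : Node} {i : ℕ} {g : Set S} : u ++ [i + 1] ∈ T.dom → Ctx T q₀ δ F (u ++ [i]) g →
      Ctx T q₀ δ F (u ++ [i + 1]) {q | δ (T.label (u ++ [i])) False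
        (mrun T q₀ δ (fun _ => False) (T.forest (u ++ [i]) 0)) q ∈ g}

variable {T : UTree A} {q₀ : S} {δ : A → Prop → S → S → S} {F : Set S}

lemma mrun_congr {M : Node → Prop} {t : BT Node} (h : ∀ s ∈ t.toList, ¬ M s) :
    mrun T q₀ δ M t = mrun T q₀ δ (fun _ => False) t :=
  run_congr _ _ _ fun s hs => by simp [h s hs]

lemma mrun_sub (M : Node → Prop) (s : Node) : mrun T q₀ δ M (T.sub s) =
    δ (T.label s) (M s) (mrun T q₀ δ M (T.forest s 0)) (mrun T q₀ δ M (T.later s)) := rfl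

lemma mem_sub (s t : Node) : t ∈ (T.sub s).toList ↔
    t = s ∨ t ∈ (T.forest s 0).toList ∨ t ∈ (T.later s).toList := by
  simp [UTree.sub, BT.toList]

lemma Ctx.spec {s : Node} {g : Set S} (h : Ctx T q₀ δ F s g) (M : Node → Prop)
    (hM : ∀ t, M t → t ∈ (T.sub s).toList) :
    mrun T q₀ δ M (T.sub []) ∈ F ↔ mrun T q₀ δ M (T.sub s) ∈ g := by
  induction h with
  | root => rfl
  | @fc s g hs _ ih =>
    rw [← UTree.forest_pos hs] at hM ⊢
    rw [ih fun t ht => (mem_sub _ _).2 (.inr (.inl (hM t ht))), mrun_sub,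
      mrun_congr (t := T.later s) fun t ht hMt => T.forest_later_disjoint s t (hM t hMt) ht,
      eq_false fun hMs => T.not_mem_forest s 0 (hM s hMs)]
    rfl
  | @ns u i g hs _ ih =>
    rw [← UTree.forest_pos hs, ← T.later_concat] at hM ⊢
    rw [ih fun t ht => (mem_sub _ _).2 (.inr (.inr (hM t ht))), mrun_sub,
      mrun_congr (t := T.forest (u ++ [i]) 0) fun t ht hMt =>
        T.forest_later_disjoint _ t ht (hM t hMt),
      eq_false fun hMs => T.not_mem_later _ (hM _ hMs)]
    rfl

lemma exists_ctx (s : Node) : s ∈ T.dom → ∃ g, Ctx T q₀ δ F s g := by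
  induction s using List.reverseRecOn with
  | nil => exact fun _ => ⟨_, .root⟩
  | append_singleton u i ih =>
    intro h
    induction i with
    | zero =>
      obtain ⟨g, hg⟩ := ih (T.prefix_closed h (List.prefix_append _ _))
      exact ⟨_, .fc h hg⟩
    | succ i ih' =>
      obtain ⟨g, hg⟩ := ih' (T.sib_closed h (by omega))
      exact ⟨_, .ns h hg⟩

lemma Ctx.mem_dom {s : Node} {g : Set S} (h : Ctx T q₀ δ F s g) : s ∈ T.dom := by
  cases h with
  | root => exact T.nil_mem
  | fc h _ => exact h
  | ns h _ => exact h

lemma nsR_concat {u t : Node} {i : ℕ} :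
    T.nsR (u ++ [i]) t ↔ t ∈ T.dom ∧ t = u ++ [i + 1] := by
  constructor
  · rintro ⟨-, h, w, j, h1, rfl⟩
    simp only [List.append_singleton_inj] at h1
    obtain ⟨rfl, rfl⟩ := h1
    exact ⟨h, rfl⟩
  · rintro ⟨h, rfl⟩
    exact ⟨T.sib_closed h (by omega), h, u, i, rfl, rfl⟩

lemma nsR_nil {t : Node} : ¬ T.nsR [] t := by
  rintro ⟨-, -, u, i, h, -⟩
  simp at h

/-- The intended solution of the system. -/
def intended (T : UTree A) (q₀ : S) (δ : A → Prop → S → S → S) (F : Set S) (Z : Set Node) :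
    Ix S → Set Node
  | some (.inl q) => {s | s ∈ T.dom ∧ mrun T q₀ δ (fun _ => False) (T.sub s) = q}
  | some (.inr f) => {s | Ctx T q₀ δ F s f}
  | none => Z

lemma FC_intended {Z : Set Node} {l : S} {s : Node} (h : FC T q₀ (intended T q₀ δ F Z) l s) :
    l = mrun T q₀ δ (fun _ => False) (T.forest s 0) := by
  rcases h with ⟨h1, h2⟩ | ⟨rfl, h2⟩
  · rw [UTree.forest_pos h1]
    exact h2.2.symm
  · rw [UTree.forest_neg h2]
    rfl

lemma NS_intended {Z : Set Node} {r : S} {s : Node} (h : NS T q₀ (intended T q₀ δ F Z) r s) :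
    r = mrun T q₀ δ (fun _ => False) (T.later s) := by
  rcases List.eq_nil_or_concat s with rfl | ⟨u, i, rfl⟩
  · rcases h with ⟨t, h1, -⟩ | ⟨rfl, -⟩
    · exact absurd h1 nsR_nil
    · rfl
  · rw [List.concat_eq_append] at *
    rw [T.later_concat]
    rcases h with ⟨t, h1, h2⟩ | ⟨rfl, h2⟩
    · obtain ⟨h3, rfl⟩ := nsR_concat.1 h1
      rw [UTree.forest_pos h3]
      exact h2.2.symm
    · rw [UTree.forest_neg fun h3 => h2 ⟨_, nsR_concat.2 ⟨h3, rfl⟩⟩]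
      rfl

lemma FC_of {X : Ix S → Set Node} {s : Node} (h : s ++ [0] ∈ T.dom →
      s ++ [0] ∈ X (.st (mrun T q₀ δ (fun _ => False) (T.sub (s ++ [0]))))) :
    FC T q₀ X (mrun T q₀ δ (fun _ => False) (T.forest s 0)) s := by
  by_cases h0 : s ++ [0] ∈ T.dom
  · rw [UTree.forest_pos h0]
    exact .inl ⟨h0, h h0⟩
  · rw [UTree.forest_neg h0]
    exact .inr ⟨rfl, h0⟩

lemma NS_of {X : Ix S → Set Node} {s : Node} (h : ∀ t, T.nsR s t →
      t ∈ X (.st (mrun T q₀ δ (fun _ => False) (T.sub t)))) :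
    NS T q₀ X (mrun T q₀ δ (fun _ => False) (T.later s)) s := by
  rcases List.eq_nil_or_concat s with rfl | ⟨u, i, rfl⟩
  · exact .inr ⟨rfl, fun ⟨t, ht⟩ => nsR_nil ht⟩
  · rw [List.concat_eq_append] at *
    rw [T.later_concat]
    by_cases h0 : u ++ [i + 1] ∈ T.dom
    · rw [UTree.forest_pos h0]
      have := nsR_concat.2 ⟨h0, rfl⟩
      exact .inl ⟨_, this, h _ this⟩
    · rw [UTree.forest_neg h0]
      refine .inr ⟨rfl, ?_⟩
      rintro ⟨t, ht⟩
      obtain ⟨h1, rfl⟩ := nsR_concat.1 ht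
      exact h0 h1

/-- The marked run at `s` is accepting iff the state it assigns to `s` lies in the context of `s`. -/
lemma Ctx.accept {s : Node} {g : Set S} (h : Ctx T q₀ δ F s g) :
    mrun T q₀ δ (fun t => t = s) (T.sub []) ∈ F ↔
      δ (T.label s) True (mrun T q₀ δ (fun _ => False) (T.forest s 0))
        (mrun T q₀ δ (fun _ => False) (T.later s)) ∈ g := by
  rw [h.spec _ fun t ht => (mem_sub _ _).2 (.inl ht), mrun_sub,
    mrun_congr (M := fun t => t = s) (t := T.forest s 0) fun t ht hMt => T.not_mem_forest s 0 (hMt ▸ ht),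
    mrun_congr (M := fun t => t = s) (t := T.later s) fun t ht hMt => T.not_mem_later s (hMt ▸ ht)]
  simp

lemma leastFam_evalOp {Z : Set Node}
    (hZ : ∀ s, s ∈ Z ↔ s ∈ T.dom ∧ mrun T q₀ δ (fun t => t = s) (T.sub []) ∈ F)
    (W : Ix S → Set Node) : leastFam (evalOp T q₀ δ F) ∅ W = intended T q₀ δ F Z := by
  apply le_antisymm
  · apply leastFam_le (by simp)
    rintro i - s hs
    rcases i with _ | q | f
    · obtain ⟨hs, l, r, f, h1, h2, h3, h4⟩ := hs
      rw [FC_intended h3, NS_intended h4] at h1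
      exact (hZ s).2 ⟨hs, (Ctx.accept h2).2 h1⟩
    · obtain ⟨hs, l, r, h1, h3, h4⟩ := hs
      rw [FC_intended h3, NS_intended h4] at h1
      exact ⟨hs, h1⟩
    · obtain ⟨hs, ⟨rfl, rfl⟩ | ⟨g, r, u, rfl, hu, rfl, h4, h5⟩ | ⟨g, l, t, rfl, h2, h4, h5⟩⟩ := hs
      · exact .root
      · rw [NS_intended h5]
        exact .fc hs h4
      · obtain ⟨-, -, u, i, rfl, rfl⟩ := h2
        rw [FC_intended h5]
        exact .ns hs h4
  · intro i s hs X _ hX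
    have hX : ∀ j, evalOp T q₀ δ F X j ⊆ X j := fun j => hX j (by simp)
    -- the states are forced bottom-up
    have step : ∀ s ∈ T.dom, (s ++ [0] ∈ T.dom →
          s ++ [0] ∈ X (.st (mrun T q₀ δ (fun _ => False) (T.sub (s ++ [0]))))) →
        (∀ t, T.nsR s t → t ∈ X (.st (mrun T q₀ δ (fun _ => False) (T.sub t)))) →
        s ∈ X (.st (mrun T q₀ δ (fun _ => False) (T.sub s))) := by
      intro s hs h1 h2
      exact hX _ ⟨hs, _, _, rfl, FC_of h1, NS_of h2⟩
    have hforest : ∀ u i, u ++ [i] ∈ T.dom →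
        u ++ [i] ∈ X (.st (mrun T q₀ δ (fun _ => False) (T.sub (u ++ [i])))) := by
      intro u i
      induction u, i using T.forest_ind with
      | pos u i h ih1 ih2 =>
        intro _
        refine step _ h ih1 fun t ht => ?_
        obtain ⟨h1, rfl⟩ := nsR_concat.1 ht
        exact ih2 h1
      | neg u i h => exact fun h' => absurd h' h
    have hst : ∀ s ∈ T.dom, s ∈ X (.st (mrun T q₀ δ (fun _ => False) (T.sub s))) := by
      intro s hs
      refine step s hs (hforest s 0) ?_
      rintro _ ⟨-, h, u, i, -, rfl⟩
      exact hforest u (i + 1) h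
    have hFC : ∀ s, FC T q₀ X (mrun T q₀ δ (fun _ => False) (T.forest s 0)) s := fun s =>
      FC_of (hst _)
    have hNS : ∀ s, NS T q₀ X (mrun T q₀ δ (fun _ => False) (T.later s)) s := fun s =>
      NS_of fun t ht => hst t ht.2.1
    have hctx : ∀ s f, Ctx T q₀ δ F s f → s ∈ X (.ctx f) := by
      intro s f h
      induction h with
      | root => exact hX _ ⟨T.nil_mem, .inl ⟨rfl, rfl⟩⟩
      | @fc s g hs h ih =>
        exact hX _ ⟨hs, .inr (.inl ⟨g, _, s, rfl, h.mem_dom, rfl, ih, hNS s⟩)⟩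
      | @ns u i g hs h ih =>
        exact hX _ ⟨hs, .inr (.inr ⟨g, _, u ++ [i], rfl, nsR_concat.2 ⟨hs, rfl⟩, ih, hFC _⟩)⟩
    rcases i with _ | q | f
    · obtain ⟨hs, h⟩ := (hZ s).1 hs
      obtain ⟨g, hg⟩ := exists_ctx (q₀ := q₀) (δ := δ) (F := F) s hs
      exact hX _ ⟨hs, _, _, g, hg.accept.1 h, hctx s g hg, hFC s, hNS s⟩
    · obtain ⟨hs, rfl⟩ := hs
      exact hst s hs
    · exact hctx s f hs

end Evaluate

/-- The unary MSO queries on ordered unranked Σ-trees are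
precisely the unary queries defined by closed formulas of the full μ-calculus
`L_μ^full[≺_ch, ≺_ns]` (the μ-calculus with backward modalities). -/
theorem mso_iff_full_mu_calculus (A : Type) [Fintype A]
    (Q : UTree A → Set Node) (hQ : ∀ T, Q T ⊆ ↑T.dom) :
    (∃ φ : MSO A, φ.DefinesU Q) ↔
      ∃ φ : MuForm A ChNs, φ.WF ∧
        ∀ (T : UTree A) (V : ℕ → Set Node) (s : Node), s ∈ T.dom →
          (s ∈ Q T ↔ s ∈ φ.sem T (ChNs.rel T) V) := by
  constructor
  · rintro ⟨φ, hφ⟩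
    obtain ⟨S, hS, q₀, δ, F, h⟩ := automaton_of_mso hφ
    obtain ⟨e, he⟩ := exists_injective_nat (Ix S)
    have hsys := evalSys_isSystem q₀ δ F
    refine ⟨sol e (evalSys q₀ δ F) (∅ᶜ : Set (Ix S)).ncard ∅ Ix.out, (sol_ok hsys _ _ _ 0).1,
      fun T V s hs => ?_⟩
    rw [sem_sol he (evalOp_mono T q₀ δ F) (sem_evalSys q₀ δ F T) _ _ le_rfl,
      leastFam_evalOp (Z := Q T)]
    · rfl
    · intro s
      exact ⟨fun hs => ⟨hQ T hs, (h T s (hQ T hs)).1 hs⟩, fun hs => (h T s hs.1).2 hs.2⟩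
  · rintro ⟨φ, -, hφ⟩
    refine ⟨toMSO φ 0, fun T v V s hs => ?_⟩
    rw [hφ T V s hs, sat_toMSO T φ 0 _ _ (by simpa using hs), Function.update_self]

end UnrankedTrees
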